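/- Let M be a squat, separable, connected m-manifold (m ≥ 1) and let ℱ be a dimension-one foliation on M × 𝕃₊ having at least one long leaf. Then no leaf of ℱ is homeomorphic, in its leaf topology, to the long line 𝕃. -/

import Mathlib

noncomputable section

open Set Topology Filter

universe u

/-! ### The long ray and the long line -/

/-- The first uncountable ordinal `ω₁`, viewed as the linearly ordered set of all
countable ordinals. -/
def Omega1 : Type 1 := {o : Ordinal.{0} // o < (Cardinal.aleph 1).ord}

instance : LinearOrder Omega1 :=
  inferInstanceAs (LinearOrder {o : Ordinal.{0} // o < (Cardinal.aleph 1).ord})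

/-- `ω₁` carries the order topology. -/
instance : TopologicalSpace Omega1 := Preorder.topology Omega1

instance : OrderTopology Omega1 := ⟨rfl⟩

/-- The underlying countable ordinal of an element of `ω₁`. -/
def Omega1.toOrdinal : Omega1 → Ordinal.{0} := Subtype.val

/-- The closed long ray `𝕃≥0`: the set `ω₁ × [0,1)` with the lexicographic order and the
order topology. -/
def ClosedLongRay : Type 1 := Omega1 ×ₗ (Set.Ico (0:ℝ) 1)

instance : LinearOrder ClosedLongRay :=
  inferInstanceAs (LinearOrder (Omega1 ×ₗ (Set.Ico (0:ℝ) 1)))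

instance : TopologicalSpace ClosedLongRay := Preorder.topology ClosedLongRay

instance : OrderTopology ClosedLongRay := ⟨rfl⟩

/-- The long ray `𝕃₊`: the closed long ray with its least element removed, with the
subspace topology (an element is non-minimal iff something is below it). -/
def LongRay : Type 1 := {x : ClosedLongRay // ∃ y, y < x}

instance : LinearOrder LongRay :=
  inferInstanceAs (LinearOrder {x : ClosedLongRay // ∃ y, y < x})

instance : TopologicalSpace LongRay :=
  inferInstanceAs (TopologicalSpace {x : ClosedLongRay // ∃ y, y < x})

/-- The inclusion of the long ray into the closed long ray. -/
def LongRay.toCLR : LongRay → ClosedLongRay := Subtype.val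

/-- The long line `𝕃`: an order-reversed copy of `𝕃₊` placed below the closed long ray
`𝕃≥0`, with the order topology. -/
def LongLine : Type 1 := (OrderDual LongRay) ⊕ₗ ClosedLongRay

instance : LinearOrder LongLine :=
  inferInstanceAs (LinearOrder ((OrderDual LongRay) ⊕ₗ ClosedLongRay))

instance : TopologicalSpace LongLine := Preorder.topology LongLine

instance : OrderTopology LongLine := ⟨rfl⟩

/-- The identification of `𝕃₊` with the set of positive elements of `𝕃`. -/
def LongRay.inL (a : LongRay) : LongLine := toLex (Sum.inr a.toCLR)

/-- The natural order-reversing involution `x ↦ -x` of the long line, exchanging the two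
copies of `𝕃₊` and fixing the least element `0` of `𝕃≥0`. -/
noncomputable def LongLine.neg (x : LongLine) : LongLine :=
  match ofLex x with
  | Sum.inl a => toLex (Sum.inr (OrderDual.ofDual a).toCLR)
  | Sum.inr b =>
      @dite _ (∃ y, y < b) (Classical.dec _)
        (fun h => toLex (Sum.inl (OrderDual.toDual (⟨b, h⟩ : LongRay))))
        (fun _ => x)

/-- A subset of the long ray is a *club* if it is closed (in the topology of `𝕃₊`) and
unbounded (i.e. cofinal). -/
def ClubInLongRay (C : Set LongRay) : Prop :=
  IsClosed C ∧ ∀ β : LongRay, ∃ α ∈ C, β ≤ α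

/-- A topological space `X` is *squat* if every continuous map `𝕃₊ → X` is eventually
constant. -/
def Squat (X : Type*) [TopologicalSpace X] : Prop :=
  ∀ f : LongRay → X, Continuous f → ∃ (β : LongRay) (x : X), ∀ α, β ≤ α → f α = x

/-! ### Manifolds and foliations -/

/-- A (topological) `n`-manifold: a nonempty Hausdorff space in which every point has an
open neighbourhood homeomorphic to `ℝⁿ`. -/
def IsTopManifold (M : Type u) [TopologicalSpace M] (n : ℕ) : Prop :=
  Nonempty M ∧ T2Space M ∧
    ∀ x : M, ∃ U : Set M, x ∈ U ∧ IsOpen U ∧ Nonempty (U ≃ₜ (Fin n → ℝ))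

/-- A foliation of dimension `p` and codimension `q` on a space `M`: a family of charts
`φᵢ : Uᵢ ≃ₜ ℝᵖ × ℝ^q` on open sets covering `M` such that all coordinate transformations
have the form `(x, y) ↦ (g (x, y), h y)`, i.e. the last `q` coordinates of the image
depend only on the last `q` coordinates of the argument. -/
structure Foliation (M : Type u) [TopologicalSpace M] (p q : ℕ) where
  /-- index type of the atlas -/
  ι : Type u
  /-- chart domains -/
  U : ι → Set M
  /-- the charts -/
  chart : (i : ι) → ((U i) ≃ₜ ((Fin p → ℝ) × (Fin q → ℝ)))
  isOpen : ∀ i, IsOpen (U i)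
  covers : ∀ x : M, ∃ i, x ∈ U i
  compat : ∀ i j (x y : M) (hxi : x ∈ U i) (hxj : x ∈ U j) (hyi : y ∈ U i) (hyj : y ∈ U j),
    (chart i ⟨x, hxi⟩).2 = (chart i ⟨y, hyi⟩).2 → (chart j ⟨x, hxj⟩).2 = (chart j ⟨y, hyj⟩).2

namespace Foliation

variable {M : Type u} [TopologicalSpace M] {p q : ℕ}

/-- The set `φᵢ⁻¹ (ℝᵖ × {y})` in the chart domain `Uᵢ`. -/
def plaqueFibre (F : Foliation M p q) (i : F.ι) (y : Fin q → ℝ) : Set M :=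
  {w : M | ∃ hw : w ∈ F.U i, (F.chart i ⟨w, hw⟩).2 = y}

/-- A *plaque* of the foliation: a connected component of a set of the form
`φᵢ⁻¹ (ℝᵖ × {y})`. -/
def IsPlaque (F : Foliation M p q) (P : Set M) : Prop :=
  ∃ (i : F.ι) (y : Fin q → ℝ) (z : M), z ∈ F.plaqueFibre i y ∧
    P = connectedComponentIn (F.plaqueFibre i y) z

/-- Two points lie in a common plaque. -/
def samePlaque (F : Foliation M p q) (x y : M) : Prop :=
  ∃ P, F.IsPlaque P ∧ x ∈ P ∧ y ∈ P

/-- The leaf relation: the smallest equivalence relation relating any two points that lie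
in a common plaque. -/
def leafRel (F : Foliation M p q) : M → M → Prop := Relation.EqvGen F.samePlaque

/-- The *leaves* of the foliation: equivalence classes of the leaf relation. -/
def IsLeaf (F : Foliation M p q) (L : Set M) : Prop :=
  ∃ x : M, L = {y | F.leafRel x y}

/-- The *leaf topology* on a leaf (or any subset) `L`: the topology generated by the
plaques contained in `L`. -/
def leafTopology (F : Foliation M p q) (L : Set M) : TopologicalSpace L :=
  TopologicalSpace.generateFrom
    {s : Set L | ∃ P, F.IsPlaque P ∧ P ⊆ L ∧ s = Subtype.val ⁻¹' P}

/-- A leaf is *long* if it is not metrisable in its leaf topology. -/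
def IsLongLeaf (F : Foliation M p q) (L : Set M) : Prop :=
  F.IsLeaf L ∧ ¬ @TopologicalSpace.MetrizableSpace L (F.leafTopology L)

/-- A subset of `M` is *saturated* by the foliation if it is a union of leaves. -/
def Saturated (F : Foliation M p q) (S : Set M) : Prop :=
  ∀ x ∈ S, ∀ y, F.leafRel x y → y ∈ S

end Foliation

noncomputable section
open Set Topology Filter

/-! ### Order facts about the long ray -/

theorem Omega1.wf : WellFounded ((· < ·) : Omega1 → Omega1 → Prop) :=
  InvImage.wf (fun x : Omega1 => x.1) (wellFounded_lt : WellFounded ((· < ·) : Ordinal.{0} → _ → Prop))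

theorem Omega1.exists_gt_seq (f : ℕ → Omega1) : ∃ b : Omega1, ∀ n, f n < b := by
  have h1 : ∀ n, (f n).1 < Ordinal.omega 1 := fun n =>
    lt_of_lt_of_eq (f n).2 (Cardinal.ord_aleph 1)
  have h2 : (⨆ n, (f n).1) < Ordinal.omega 1 := Ordinal.iSup_lt_omega_one h1
  have h3 : Order.succ (⨆ n, (f n).1) < Ordinal.omega 1 :=
    (Cardinal.isSuccLimit_omega 1).succ_lt h2
  refine ⟨⟨Order.succ (⨆ n, (f n).1), lt_of_lt_of_eq h3 (Cardinal.ord_aleph 1).symm⟩, fun n => ?_⟩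
  change (f n).1 < Order.succ (⨆ n, (f n).1)
  exact Order.lt_succ_of_le (Ordinal.le_iSup (fun n => (f n).1) n)

/-- first coordinate -/
def ClosedLongRay.fst (x : ClosedLongRay) : Omega1 := (ofLex x).1
/-- second coordinate -/
def ClosedLongRay.snd (x : ClosedLongRay) : ℝ := ((ofLex x).2 : ℝ)
/-- constructor -/
def ClosedLongRay.mk (o : Omega1) (r : Set.Ico (0:ℝ) 1) : ClosedLongRay := toLex (o, r)

theorem ClosedLongRay.lt_iff (x y : ClosedLongRay) :
    x < y ↔ x.fst < y.fst ∨ x.fst = y.fst ∧ x.snd < y.snd :=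
  Prod.Lex.lt_iff

theorem ClosedLongRay.le_iff (x y : ClosedLongRay) :
    x ≤ y ↔ x.fst < y.fst ∨ x.fst = y.fst ∧ x.snd ≤ y.snd :=
  Prod.Lex.le_iff

theorem ClosedLongRay.exists_gt_seq (f : ℕ → ClosedLongRay) : ∃ b, ∀ n, f n < b := by
  obtain ⟨b, hb⟩ := Omega1.exists_gt_seq (fun n => (f n).fst)
  refine ⟨ClosedLongRay.mk b ⟨0, by simp⟩, fun n => ?_⟩
  rw [ClosedLongRay.lt_iff]
  exact Or.inl (hb n)

theorem ClosedLongRay.exists_isGLB (S : Set ClosedLongRay) (hS : S.Nonempty) :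
    ∃ a, IsGLB S a := by
  obtain ⟨o, ⟨x₀, hx₀, rfl⟩, ho⟩ := Omega1.wf.has_min (ClosedLongRay.fst '' S) (hS.image _)
  have hmin : ∀ x ∈ S, x₀.fst ≤ x.fst := fun x hx => not_lt.1 (ho _ ⟨x, hx, rfl⟩)
  set T : Set ℝ := {r | ∃ x ∈ S, x.fst = x₀.fst ∧ x.snd = r} with hT
  have hT0 : ∀ r ∈ T, 0 ≤ r := by
    rintro r ⟨x, hx, h1, rfl⟩
    exact (ofLex x).2.2.1
  have hbd : BddBelow T := ⟨0, hT0⟩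
  have hx₀T : x₀.snd ∈ T := ⟨x₀, hx₀, rfl, rfl⟩
  have h1 : sInf T < 1 := lt_of_le_of_lt (csInf_le hbd hx₀T) (ofLex x₀).2.2.2
  have h0 : 0 ≤ sInf T := le_csInf ⟨_, hx₀T⟩ hT0
  refine ⟨ClosedLongRay.mk x₀.fst ⟨sInf T, h0, h1⟩, ?_, ?_⟩
  · intro x hx
    rw [ClosedLongRay.le_iff]
    rcases (hmin x hx).lt_or_eq with h | h
    · exact Or.inl h
    · exact Or.inr ⟨h, csInf_le hbd ⟨x, hx, h.symm, rfl⟩⟩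
  · intro y hy
    rw [ClosedLongRay.le_iff]
    rcases (ClosedLongRay.le_iff _ _).1 (hy hx₀) with h | ⟨h, h'⟩
    · exact Or.inl h
    · refine Or.inr ⟨h, ?_⟩
      apply le_csInf ⟨_, hx₀T⟩
      rintro r ⟨x, hx, hx1, rfl⟩
      rcases (ClosedLongRay.le_iff _ _).1 (hy hx) with h2 | ⟨h2, h3⟩
      · exact absurd h2 (by rw [hx1, h]; exact lt_irrefl _)
      · exact h3

/-- A linear order in which every nonempty set bounded below has an infimum. -/
@[reducible] def cclOfInf {R : Type*} [inst : LinearOrder R] (r₀ : R)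
    (H : ∀ S : Set R, S.Nonempty → BddBelow S → ∃ a, IsGLB S a) :
    ConditionallyCompleteLinearOrder R := by
  classical
  have H' : ∀ S : Set R, S.Nonempty → BddAbove S → ∃ a, IsLUB S a := by
    intro S hS hb
    obtain ⟨a, ha⟩ := H (upperBounds S) hb ⟨hS.some, fun y hy => hy hS.some_mem⟩
    exact ⟨a, isGLB_upperBounds.1 ha⟩
  exact
  { inst with
    sup := max
    inf := min
    le_sup_left := le_max_left
    le_sup_right := le_max_right
    sup_le := fun _ _ _ => max_le
    inf_le_left := min_le_left
    inf_le_right := min_le_right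
    le_inf := fun _ _ _ => le_min
    sSup := fun S => if h : ∃ a, IsLUB S a ∧ S.Nonempty then h.choose else r₀
    sInf := fun S => if h : ∃ a, IsGLB S a ∧ S.Nonempty then h.choose else r₀
    isLUB_csSup := by
      intro S hS hb
      obtain ⟨a, ha⟩ := H' S hS hb
      have h : ∃ a, IsLUB S a ∧ S.Nonempty := ⟨a, ha, hS⟩
      simp only [h, dif_pos]
      exact h.choose_spec.1
    isGLB_csInf := by
      intro S hS hb
      obtain ⟨a, ha⟩ := H S hS hb
      have h : ∃ a, IsGLB S a ∧ S.Nonempty := ⟨a, ha, hS⟩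
      simp only [h, dif_pos]
      exact h.choose_spec.1
    csSup_of_not_bddAbove := by
      intro S hS
      have h : ¬ ∃ a, IsLUB S a ∧ S.Nonempty := fun ⟨a, ha, _⟩ => hS ⟨a, ha.1⟩
      have h' : ¬ ∃ a, IsLUB (∅ : Set R) a ∧ (∅ : Set R).Nonempty := fun ⟨a, _, ha⟩ => by simp at ha
      simp only [h, h', dif_neg, not_false_eq_true]
    csInf_of_not_bddBelow := by
      intro S hS
      have h : ¬ ∃ a, IsGLB S a ∧ S.Nonempty := fun ⟨a, ha, _⟩ => hS ⟨a, ha.1⟩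
      have h' : ¬ ∃ a, IsGLB (∅ : Set R) a ∧ (∅ : Set R).Nonempty := fun ⟨a, _, ha⟩ => by simp at ha
      simp only [h, h', dif_neg, not_false_eq_true] }

/-- The bottom point. -/
def ClosedLongRay.zero : ClosedLongRay :=
  ClosedLongRay.mk ⟨0, by rw [Cardinal.ord_aleph]; exact Ordinal.omega_pos 1⟩ ⟨0, by simp⟩

theorem ClosedLongRay.zero_le (x : ClosedLongRay) : ClosedLongRay.zero ≤ x := by
  rw [ClosedLongRay.le_iff]
  have h : (ClosedLongRay.zero).fst ≤ x.fst := by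
    change (0 : Ordinal) ≤ x.fst.1
    exact _root_.zero_le
  rcases h.lt_or_eq with h | h
  · exact Or.inl h
  · exact Or.inr ⟨h, (ofLex x).2.2.1⟩

instance : ConditionallyCompleteLinearOrder ClosedLongRay :=
  cclOfInf ClosedLongRay.zero (fun S hS _ => ClosedLongRay.exists_isGLB S hS)

instance icoNoMax : NoMaxOrder (Set.Ico (0:ℝ) 1) := inferInstance

instance : DenselyOrdered ClosedLongRay :=
  inferInstanceAs (DenselyOrdered (Omega1 ×ₗ (Set.Ico (0:ℝ) 1)))

instance : NoMaxOrder ClosedLongRay := ⟨fun a => by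
  obtain ⟨b, hb⟩ := ClosedLongRay.exists_gt_seq (fun _ => a)
  exact ⟨b, hb 0⟩⟩

theorem LongRay.lt_iff (a b : LongRay) : a < b ↔ a.toCLR < b.toCLR := Iff.rfl
theorem LongRay.le_iff (a b : LongRay) : a ≤ b ↔ a.toCLR ≤ b.toCLR := Iff.rfl

theorem LongRay.exists_gt_seq (f : ℕ → LongRay) : ∃ b, ∀ n, f n < b := by
  obtain ⟨b, hb⟩ := ClosedLongRay.exists_gt_seq (fun n => (f n).toCLR)
  exact ⟨⟨b, _, hb 0⟩, hb⟩

instance : NoMaxOrder LongRay := ⟨fun a => by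
  obtain ⟨b, hb⟩ := LongRay.exists_gt_seq (fun _ => a)
  exact ⟨b, hb 0⟩⟩

instance : DenselyOrdered LongRay := ⟨fun a b hab => by
  obtain ⟨c, h1, h2⟩ := exists_between ((LongRay.lt_iff a b).1 hab)
  exact ⟨⟨c, _, h1⟩, h1, h2⟩⟩

instance : NoMinOrder LongRay := ⟨fun a => by
  obtain ⟨y, hy⟩ := a.2
  obtain ⟨c, h1, h2⟩ := exists_between hy
  exact ⟨⟨c, _, h1⟩, h2⟩⟩

instance : Nonempty LongRay := by
  obtain ⟨b, hb⟩ := exists_gt ClosedLongRay.zero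
  exact ⟨⟨b, _, hb⟩⟩

instance : ConditionallyCompleteLinearOrder LongRay :=
  cclOfInf (Classical.arbitrary LongRay) (fun S hS hb => by
    obtain ⟨a, ha⟩ := ClosedLongRay.exists_isGLB (LongRay.toCLR '' S) (hS.image _)
    obtain ⟨l, hl⟩ := hb
    obtain ⟨y, hy⟩ := l.2
    have hla : l.toCLR ≤ a := ha.2 (by rintro _ ⟨x, hx, rfl⟩; exact hl hx)
    refine ⟨⟨a, y, lt_of_lt_of_le hy hla⟩, ?_, ?_⟩
    · intro x hx
      exact ha.1 ⟨x, hx, rfl⟩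
    · intro z hz
      exact ha.2 (by rintro _ ⟨x, hx, rfl⟩; exact hz hx))

instance longRayOrdConnected : OrdConnected {x : ClosedLongRay | ∃ y, y < x} :=
  ⟨fun _ hx _ _ _ hz => ⟨hx.choose, lt_of_lt_of_le hx.choose_spec hz.1⟩⟩

instance : OrderTopology LongRay :=
  orderTopology_of_ordConnected (t := {x : ClosedLongRay | ∃ y, y < x})

theorem LongRay.continuous_toCLR : Continuous LongRay.toCLR := continuous_subtype_val

/-- the two halves of the long line -/
def LongLine.pos (x : ClosedLongRay) : LongLine := toLex (Sum.inr x)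

/-- the negative half -/
def LongLine.negHalf (x : ClosedLongRay) : LongLine := LongLine.neg (LongLine.pos x)

theorem LongLine.pos_strictMono : StrictMono LongLine.pos := fun _ _ hab =>
  Sum.Lex.inr_lt_inr_iff.2 hab

theorem LongLine.continuous_pos : Continuous LongLine.pos := by
  have : OrdConnected (range LongLine.pos) := by
    refine ⟨?_⟩
    rintro _ ⟨x, rfl⟩ _ ⟨y, rfl⟩ z hz
    rcases z with z | z
    · exact absurd hz.1 (Sum.Lex.not_inr_le_inl)
    · exact ⟨z, rfl⟩
  exact (LongLine.pos_strictMono.isEmbedding_of_ordConnected this).continuous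

theorem LongLine.negHalf_pos (a : LongRay) :
    LongLine.negHalf a.toCLR = toLex (Sum.inl (OrderDual.toDual a)) := by
  have : ∃ y, y < a.toCLR := a.2
  exact dif_pos this

theorem LongLine.negHalf_zero (a : ClosedLongRay) (h : ¬ ∃ y, y < a) :
    LongLine.negHalf a = LongLine.pos a := dif_neg h

theorem LongLine.negHalf_strictAnti : StrictAnti LongLine.negHalf := by
  intro a b hab
  have hb : ∃ y, y < b := ⟨a, hab⟩
  have e1 := LongLine.negHalf_pos ⟨b, hb⟩
  change LongLine.negHalf b = _ at e1
  rw [e1]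
  by_cases ha : ∃ y, y < a
  · have e2 := LongLine.negHalf_pos ⟨a, ha⟩
    change LongLine.negHalf a = _ at e2
    rw [e2]
    exact Sum.Lex.inl_lt_inl_iff.2 hab
  · rw [LongLine.negHalf_zero a ha]
    exact Sum.Lex.inl_lt_inr _ _

theorem LongLine.exists_cover (t : LongLine) :
    (∃ x, LongLine.pos x = t) ∨ ∃ x, LongLine.negHalf x = t := by
  rcases t with z | z
  · exact Or.inr ⟨_, LongLine.negHalf_pos (OrderDual.ofDual z)⟩
  · exact Or.inl ⟨z, rfl⟩

theorem LongLine.continuous_negHalf : Continuous LongLine.negHalf := by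
  have : OrdConnected (range (LongLine.negHalf ∘ OrderDual.ofDual)) := by
    refine ⟨?_⟩
    rintro _ ⟨x, rfl⟩ _ ⟨y, rfl⟩ z hz
    rcases LongLine.exists_cover z with ⟨w, rfl⟩ | ⟨w, rfl⟩
    · have h0 : LongLine.negHalf (OrderDual.ofDual y) ≤ LongLine.negHalf ClosedLongRay.zero :=
        LongLine.negHalf_strictAnti.antitone (ClosedLongRay.zero_le _)
      have hz0 : ¬ ∃ y, y < ClosedLongRay.zero := fun ⟨y, hy⟩ =>
        absurd hy (not_lt.2 (ClosedLongRay.zero_le _))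
      have h1 := hz.2.trans h0
      rw [LongLine.negHalf_zero _ hz0] at h1
      have h2 : w = ClosedLongRay.zero :=
        le_antisymm (LongLine.pos_strictMono.le_iff_le.1 h1) (ClosedLongRay.zero_le _)
      subst h2
      exact ⟨OrderDual.toDual ClosedLongRay.zero, LongLine.negHalf_zero _ hz0⟩
    · exact ⟨OrderDual.toDual w, rfl⟩
  have hs : StrictMono (LongLine.negHalf ∘ OrderDual.ofDual) := fun a b hab =>
    LongLine.negHalf_strictAnti hab
  exact (hs.isEmbedding_of_ordConnected this).continuous

end

noncomputable section
open Set Topology Filter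

section LongOrders
variable {R : Type*} [ConditionallyCompleteLinearOrder R]

theorem long_colour (hR : ∀ f : ℕ → R, ∃ b, ∀ n, f n < b) (P : ℕ → R → Prop)
    (h : ∀ b, ∃ s, b < s ∧ ∃ n, P n s) : ∃ n, ∀ b, ∃ s, b < s ∧ P n s := by
  by_contra hcon
  push Not at hcon
  choose g hg using hcon
  obtain ⟨b, hb⟩ := hR g
  obtain ⟨s, hs, n, hn⟩ := h b
  exact hg n s ((hb n).trans hs) hn

theorem long_no_anti (hR : ∀ f : ℕ → R, ∃ b, ∀ n, f n < b) (t₁ : R) (f : R → ℝ)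
    (hf : StrictAntiOn f (Ici t₁)) (h0 : ∀ t, 0 ≤ f t) : False := by
  have hne : (f '' Ici t₁).Nonempty := ⟨f t₁, t₁, le_refl _, rfl⟩
  have hbd : BddBelow (f '' Ici t₁) := ⟨0, by rintro _ ⟨t, _, rfl⟩; exact h0 t⟩
  have key : ∀ n : ℕ, ∃ t, t₁ ≤ t ∧ f t < sInf (f '' Ici t₁) + 1 / ((n:ℝ) + 1) := by
    intro n
    have hpos : (0:ℝ) < 1 / ((n:ℝ) + 1) := by positivity
    obtain ⟨_, ⟨t, ht, rfl⟩, h⟩ := exists_lt_of_csInf_lt hne (lt_add_of_pos_right _ hpos)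
    exact ⟨t, ht, h⟩
  choose t ht1 ht2 using key
  obtain ⟨T, hT⟩ := hR t
  obtain ⟨T', hT'⟩ := hR (fun _ => T)
  have hT' := hT' 0
  have hT1 : t₁ ≤ T := (ht1 0).trans (hT 0).le
  have h1 : f T ≤ sInf (f '' Ici t₁) := by
    refine le_of_forall_pos_lt_add fun ε hε => ?_
    obtain ⟨n, hn⟩ := exists_nat_one_div_lt hε
    have := hf (ht1 n) hT1 (hT n)
    have := ht2 n
    linarith
  have h2 := hf hT1 (hT1.trans hT'.le) hT'
  have h3 : sInf (f '' Ici t₁) ≤ f T' := csInf_le hbd ⟨T', hT1.trans hT'.le, rfl⟩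
  linarith

variable [TopologicalSpace R] [OrderTopology R]

/-- A recursively built sequence has a limit above all its terms. -/
theorem long_seq (hR : ∀ f : ℕ → R, ∃ b, ∀ n, f n < b) (s : ℕ → R) (hs : StrictMono s) :
    ∃ l, Tendsto s atTop (𝓝 l) ∧ ∀ n, s n < l := by
  obtain ⟨b, hb⟩ := hR s
  have hbd : BddAbove (range s) := ⟨b, by rintro _ ⟨n, rfl⟩; exact (hb n).le⟩
  refine ⟨_, tendsto_atTop_ciSup hs.monotone hbd, fun n => ?_⟩
  exact lt_of_lt_of_le (hs (Nat.lt_succ_self n)) (le_ciSup hbd (n+1))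

theorem long_press (hR : ∀ f : ℕ → R, ∃ b, ∀ n, f n < b) (β : R) (f : R → R)
    (hf : ∀ s, β < s → f s < s) : ∃ γ, ∀ b, ∃ s, b < s ∧ β < s ∧ f s ≤ γ := by
  by_contra hcon
  push Not at hcon
  choose g hg using hcon
  have hnext : ∀ a, ∃ b, a < b ∧ g a < b ∧ β < b := fun a => by
    obtain ⟨b, hb⟩ := hR (fun n => if n = 0 then a else if n = 1 then g a else β)
    exact ⟨b, by simpa using hb 0, by simpa using hb 1, by simpa using hb 2⟩
  choose nx h1 h2 h3 using hnext
  set s : ℕ → R := fun n => nx^[n] β with hs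
  have hsucc : ∀ n, s (n+1) = nx (s n) := fun n => Function.iterate_succ_apply' nx n β
  have hmono : StrictMono s := strictMono_nat_of_lt_succ (fun n => by rw [hsucc]; exact h1 _)
  obtain ⟨l, hl, hlt⟩ := long_seq hR s hmono
  have hβ : β < l := hlt 0
  obtain ⟨n, hn⟩ := (hl.eventually (eventually_gt_nhds (hf l hβ))).exists
  have := hg (s n) l ((h2 (s n)).trans (by rw [← hsucc]; exact hlt _)) hβ
  exact absurd hn (not_lt.2 this.le)

theorem long_evconst (hR : ∀ f : ℕ → R, ∃ b, ∀ n, f n < b) {E : Type*} [MetricSpace E]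
    (γ : R) (f : R → E) (hf : ContinuousOn f (Ioi γ)) :
    ∃ b, γ < b ∧ ∀ s, b ≤ s → f s = f b := by
  have key : ∀ n : ℕ, ∃ b, γ < b ∧ ∀ s, b ≤ s → dist (f s) (f b) < 1 / ((n:ℝ) + 1) := by
    intro n
    by_contra hcon
    push Not at hcon
    have hcon' : ∀ b, ∃ s, γ < b → b ≤ s ∧ 1 / ((n:ℝ) + 1) ≤ dist (f s) (f b) := by
      intro b
      by_cases hb : γ < b
      · obtain ⟨s, hs⟩ := hcon b hb
        exact ⟨s, fun _ => hs⟩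
      · exact ⟨b, fun h => absurd h hb⟩
    choose g hg using hcon'
    have hpos : (0:ℝ) < 1 / ((n:ℝ) + 1) := by positivity
    have hlt : ∀ b, γ < b → b < g b := by
      intro b hb
      refine lt_of_le_of_ne (hg b hb).1 ?_
      intro h
      have := (hg b hb).2
      rw [← h, dist_self] at this
      linarith
    obtain ⟨b₀, hb₀⟩ := hR (fun _ => γ)
    have hb₀ := hb₀ 0
    set s : ℕ → R := fun n => g^[n] b₀ with hs
    have hsucc : ∀ n, s (n+1) = g (s n) := fun n => Function.iterate_succ_apply' g n b₀
    have hγ : ∀ n, γ < s n := by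
      intro n
      induction n with
      | zero => exact hb₀
      | succ k ih => rw [hsucc]; exact ih.trans (hlt _ ih)
    have hmono : StrictMono s := strictMono_nat_of_lt_succ (fun n => by rw [hsucc]; exact hlt _ (hγ n))
    obtain ⟨l, hl, hll⟩ := long_seq hR s hmono
    have hc : ContinuousAt f l := hf.continuousAt (Ioi_mem_nhds ((hγ 0).trans (hll 0)))
    have t1 : Tendsto (fun n => f (s n)) atTop (𝓝 (f l)) := hc.tendsto.comp hl
    have t2 : Tendsto (fun n => f (s (n+1))) atTop (𝓝 (f l)) := (tendsto_add_atTop_iff_nat 1).2 t1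
    have t3 := t2.dist t1
    rw [dist_self] at t3
    obtain ⟨k, hk⟩ := (t3.eventually (eventually_lt_nhds hpos)).exists
    have := (hg (s k) (hγ k)).2
    rw [hsucc] at hk
    linarith
  choose b hb1 hb2 using key
  obtain ⟨B, hB⟩ := hR b
  refine ⟨B, (hb1 0).trans (hB 0), fun s hs => ?_⟩
  refine eq_of_forall_dist_le fun ε hε => ?_
  obtain ⟨n, hn⟩ := exists_nat_one_div_lt (half_pos hε)
  have h1 := hb2 n s ((hB n).le.trans hs)
  have h2 := hb2 n B (hB n).le
  have h3 := dist_triangle_right (f s) (f B) (f (b n))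
  linarith

end LongOrders

theorem long_unbdd {R S : Type*} [ConditionallyCompleteLinearOrder R]
    [ConditionallyCompleteLinearOrder S] [TopologicalSpace S] [OrderTopology S]
    (hS : ∀ e : S, (𝓝 e).IsCountablyGenerated)
    (hR : ∀ f : ℕ → R, ∃ b, ∀ n, f n < b) (t₁ : R) (r : R → S) (hr : StrictMonoOn r (Ici t₁))
    (c : S) : ∃ t, t₁ ≤ t ∧ c < r t := by
  by_contra hcon
  push Not at hcon
  have hne : (r '' Ici t₁).Nonempty := ⟨r t₁, t₁, le_refl _, rfl⟩
  have hbd : BddAbove (r '' Ici t₁) := ⟨c, by rintro _ ⟨t, ht, rfl⟩; exact hcon t ht⟩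
  have hlub := isLUB_csSup hne hbd
  set e := sSup (r '' Ici t₁)
  have := hS e
  obtain ⟨u, _, _, hu, hmem⟩ := hlub.exists_seq_monotone_tendsto hne
  choose t ht1 ht2 using hmem
  obtain ⟨T, hT⟩ := hR t
  obtain ⟨T', hT'⟩ := hR (fun _ => T)
  have hT' := hT' 0
  have hT1 : t₁ ≤ T := (ht1 0 : t₁ ≤ t 0).trans (hT 0).le
  have h1 : e ≤ r T := le_of_tendsto hu (Eventually.of_forall fun n => by
    rw [← ht2 n]; exact (hr (ht1 n) hT1 (hT n)).le)
  have h2 := hr hT1 (hT1.trans hT'.le) hT'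
  exact absurd (hlub.1 ⟨T', hT1.trans hT'.le, rfl⟩) (not_le.2 (h1.trans_lt h2))

theorem inj_mono_or_anti {R S : Type*} [ConditionallyCompleteLinearOrder R] [DenselyOrdered R]
    [TopologicalSpace R] [OrderTopology R] [NoMaxOrder R]
    [LinearOrder S] [TopologicalSpace S] [OrderClosedTopology S]
    (t₁ : R) (r : R → S) (hc : ContinuousOn r (Ici t₁)) (hi : InjOn r (Ici t₁)) :
    StrictMonoOn r (Ici t₁) ∨ StrictAntiOn r (Ici t₁) := by
  have hsub : ∀ t, Icc t₁ t ⊆ Ici t₁ := fun t x hx => hx.1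
  have hor : ∀ t, t₁ ≤ t → StrictMonoOn r (Icc t₁ t) ∨ StrictAntiOn r (Icc t₁ t) := fun t ht =>
    (hc.mono (hsub t)).strictMonoOn_of_injOn_Icc' ht (hi.mono (hsub t))
  by_cases h : ∃ t₂, t₁ < t₂ ∧ r t₁ < r t₂
  · obtain ⟨t₂, h12, hr12⟩ := h
    left
    intro a ha b hb hab
    have hm1 : t₁ ≤ max b t₂ := le_trans hb (le_max_left _ _)
    rcases hor _ hm1 with hh | hh
    · exact hh ⟨ha, hab.le.trans (le_max_left _ _)⟩ ⟨hb, le_max_left _ _⟩ hab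
    · exact absurd (hh ⟨le_refl _, hm1⟩ ⟨h12.le, le_max_right _ _⟩ h12) (not_lt.2 hr12.le)
  · push Not at h
    right
    intro a ha b hb hab
    rcases hor b hb with hh | hh
    · have hlt : t₁ < b := lt_of_le_of_lt ha hab
      exact absurd (hh ⟨le_refl _, hlt.le⟩ ⟨hlt.le, le_refl _⟩ hlt) (not_lt.2 (h b hlt))
    · exact hh ⟨ha, hab.le⟩ ⟨hb, le_refl _⟩ hab

theorem clr_no_anti (t₁ : ClosedLongRay) (r : ClosedLongRay → LongRay)
    (hr : StrictAntiOn r (Ici t₁)) : False := by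
  obtain ⟨o, ⟨t₂, ht₂, rfl⟩, ho⟩ := Omega1.wf.has_min
    ((fun t => (r t).toCLR.fst) '' Ici t₁) ⟨_, t₁, Set.mem_Ici.2 (le_refl t₁), rfl⟩
  have hconst : ∀ t, t₂ ≤ t → (r t).toCLR.fst = (r t₂).toCLR.fst := by
    intro t ht
    have h1 := not_lt.1 (ho _ ⟨t, le_trans ht₂ ht, rfl⟩)
    refine le_antisymm ?_ h1
    have h2 : (r t).toCLR ≤ (r t₂).toCLR := hr.antitoneOn ht₂ (le_trans ht₂ ht) ht
    rcases (ClosedLongRay.le_iff _ _).1 h2 with h | h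
    · exact h.le
    · exact h.1.le
  refine long_no_anti ClosedLongRay.exists_gt_seq t₂ (fun t => (r t).toCLR.snd) ?_
    (fun t => (ofLex (r t).toCLR).2.2.1)
  intro a ha b hb hab
  have h := (ClosedLongRay.lt_iff (r b).toCLR (r a).toCLR).1 (hr (Ici_subset_Ici.2 ht₂ ha) (Ici_subset_Ici.2 ht₂ hb) hab)
  rw [hconst a ha, hconst b hb] at h
  rcases h with h | h
  · exact absurd h (lt_irrefl _)
  · exact h.2

end

noncomputable section
set_option linter.unusedSectionVars false
set_option linter.unusedVariables false
open Set Topology Filter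

/-- An atlas of flow boxes, in unbundled form. -/
structure FB (X : Type*) [TopologicalSpace X] (E : Type*) [TopologicalSpace E] where
  /-- index type -/
  I : Type*
  /-- domains -/
  U : I → Set X
  /-- coordinate along the leaf -/
  u : I → X → ℝ
  /-- transverse coordinate -/
  pr : I → X → E
  /-- inverse chart -/
  c : I → ℝ → E → X
  isOpen : ∀ i, IsOpen (U i)
  covers : ∀ x, ∃ i, x ∈ U i
  cont_c : ∀ i, Continuous (fun z : ℝ × E => c i z.1 z.2)
  c_mem : ∀ i a y, c i a y ∈ U i
  u_c : ∀ i a y, u i (c i a y) = a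
  pr_c : ∀ i a y, pr i (c i a y) = y
  c_eq : ∀ i p, p ∈ U i → c i (u i p) (pr i p) = p
  cont_u : ∀ i, ContinuousOn (u i) (U i)
  cont_pr : ∀ i, ContinuousOn (pr i) (U i)
  compat : ∀ i j x y, x ∈ U i → x ∈ U j → y ∈ U i → y ∈ U j → pr i x = pr i y → pr j x = pr j y

namespace FB
variable {X : Type*} [TopologicalSpace X] {E : Type*} [NormedAddCommGroup E] [NormedSpace ℝ E]
  (A : FB X E)

theorem ext_of {i : A.I} {p q : X} (hp : p ∈ A.U i) (hq : q ∈ A.U i) (h1 : A.u i p = A.u i q)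
    (h2 : A.pr i p = A.pr i q) : p = q := by
  rw [← A.c_eq i p hp, ← A.c_eq i q hq, h1, h2]

/-- `W` increases along plaques of the `i`-th chart near `p`. -/
def Inc {Y : Type*} [LT Y] (i : A.I) (p : X) (W : X → Y) : Prop :=
  ∃ N ∈ 𝓝 p, ∀ q ∈ N, ∀ q' ∈ N, q ∈ A.U i → q' ∈ A.U i → A.pr i q = A.pr i q' →
    A.u i q < A.u i q' → W q < W q'

def Dec {Y : Type*} [LT Y] (i : A.I) (p : X) (W : X → Y) : Prop :=
  ∃ N ∈ 𝓝 p, ∀ q ∈ N, ∀ q' ∈ N, q ∈ A.U i → q' ∈ A.U i → A.pr i q = A.pr i q' →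
    A.u i q < A.u i q' → W q' < W q

theorem box {i : A.I} {p : X} (hp : p ∈ A.U i) {N : Set X} (hN : N ∈ 𝓝 p) :
    ∃ δ > 0, ∀ a y, a ∈ Ioo (A.u i p - δ) (A.u i p + δ) → y ∈ Metric.ball (A.pr i p) δ →
      A.c i a y ∈ N := by
  have h1 : (fun z : ℝ × E => A.c i z.1 z.2) ⁻¹' N ∈ 𝓝 (A.u i p, A.pr i p) := by
    apply (A.cont_c i).continuousAt.preimage_mem_nhds
    simpa [A.c_eq i p hp] using hN
  obtain ⟨δ, hδ, h⟩ := Metric.mem_nhds_iff.1 h1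
  refine ⟨δ, hδ, fun a y ha hy => ?_⟩
  have hm : ((a, y) : ℝ × E) ∈ Metric.ball (A.u i p, A.pr i p) δ := by
    rw [← ball_prod_same]
    refine ⟨?_, hy⟩
    rw [Real.ball_eq_Ioo]
    exact ha
  exact h hm

theorem box_nhds {i : A.I} {p : X} (hp : p ∈ A.U i) {δ : ℝ} (hδ : 0 < δ) :
    {q | q ∈ A.U i ∧ A.u i q ∈ Ioo (A.u i p - δ) (A.u i p + δ) ∧
      A.pr i q ∈ Metric.ball (A.pr i p) δ} ∈ 𝓝 p := by
  have hU : A.U i ∈ 𝓝 p := (A.isOpen i).mem_nhds hp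
  have h1 := ((A.cont_u i).continuousAt hU).preimage_mem_nhds
    (Ioo_mem_nhds (show A.u i p - δ < A.u i p by linarith) (show A.u i p < A.u i p + δ by linarith))
  have h2 := ((A.cont_pr i).continuousAt hU).preimage_mem_nhds (Metric.ball_mem_nhds _ hδ)
  filter_upwards [hU, h1, h2] with q a b c
  exact ⟨a, b, c⟩

theorem cont_line (i : A.I) (y : E) : Continuous (fun a => A.c i a y) :=
  (A.cont_c i).comp (by fun_prop : Continuous fun a : ℝ => (a, y))

theorem cont_trans (i : A.I) (a : ℝ) : Continuous (fun y => A.c i a y) :=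
  (A.cont_c i).comp (by fun_prop : Continuous fun y : E => (a, y))

theorem dir_aux {Y : Type*} [LinearOrder Y] [TopologicalSpace Y] [OrderClosedTopology Y]
    {i : A.I} {p : X} (hp : p ∈ A.U i) (W : X → Y) {N : Set X}
    (hW : ContinuousOn W N)
    (hinj : ∀ q ∈ N, ∀ q' ∈ N, q ∈ A.U i → q' ∈ A.U i → A.pr i q = A.pr i q' → W q = W q' → q = q')
    {δ : ℝ} (hδ : 0 < δ) (hbox : ∀ a y, a ∈ Ioo (A.u i p - δ) (A.u i p + δ) →
      y ∈ Metric.ball (A.pr i p) δ → A.c i a y ∈ N)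
    (hlt : W (A.c i (A.u i p - δ/2) (A.pr i p)) < W (A.c i (A.u i p + δ/2) (A.pr i p))) :
    A.Inc i p W := by
  have m1 : A.u i p - δ/2 ∈ Ioo (A.u i p - δ) (A.u i p + δ) := ⟨by linarith, by linarith⟩
  have m2 : A.u i p + δ/2 ∈ Ioo (A.u i p - δ) (A.u i p + δ) := ⟨by linarith, by linarith⟩
  have c1 : ∀ a ∈ Ioo (A.u i p - δ) (A.u i p + δ),
      ContinuousOn (fun y => W (A.c i a y)) (Metric.ball (A.pr i p) δ) := fun a ha =>
    hW.comp (A.cont_trans i a).continuousOn (fun y hy => hbox a y ha hy)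
  have inj : ∀ y ∈ Metric.ball (A.pr i p) δ, InjOn (fun a => W (A.c i a y))
      (Ioo (A.u i p - δ) (A.u i p + δ)) := by
    intro y hy a ha b hb hab
    have := hinj _ (hbox a y ha hy) _ (hbox b y hb hy) (A.c_mem _ _ _) (A.c_mem _ _ _)
      (by rw [A.pr_c, A.pr_c]) hab
    rw [← A.u_c i a y, this, A.u_c]
  have hall : ∀ y ∈ Metric.ball (A.pr i p) δ,
      W (A.c i (A.u i p - δ/2) y) < W (A.c i (A.u i p + δ/2) y) := by
    intro y hy
    by_contra hcon
    obtain ⟨z, hz, hz'⟩ := (convex_ball (A.pr i p) δ).isPreconnected.intermediate_value₂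
      (Metric.mem_ball_self hδ) hy (c1 _ m1) (c1 _ m2) hlt.le (not_lt.1 hcon)
    have := inj z hz m1 m2 hz'
    linarith
  have mono : ∀ y ∈ Metric.ball (A.pr i p) δ, StrictMonoOn (fun a => W (A.c i a y))
      (Ioo (A.u i p - δ) (A.u i p + δ)) := by
    intro y hy
    have hc : ContinuousOn (fun a => W (A.c i a y)) (Ioo (A.u i p - δ) (A.u i p + δ)) :=
      hW.comp (A.cont_line i y).continuousOn (fun a ha => hbox a y ha hy)
    rcases hc.strictMonoOn_of_injOn_Ioo (by linarith) (inj y hy) with h | h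
    · exact h
    · exact absurd (h m1 m2 (by linarith)) (not_lt.2 (hall y hy).le)
  refine ⟨_, A.box_nhds hp hδ, ?_⟩
  rintro q ⟨_, hq1, hq2⟩ q' ⟨_, hq1', _⟩ hq hq' hpr hu
  have := mono _ hq2 hq1 hq1' hu
  simp only at this
  rw [A.c_eq i q hq, hpr, A.c_eq i q' hq'] at this
  exact this

theorem dir {Y : Type*} [LinearOrder Y] [TopologicalSpace Y] [OrderClosedTopology Y]
    {i : A.I} {p : X} (hp : p ∈ A.U i) (W : X → Y) {N : Set X} (hN : N ∈ 𝓝 p)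
    (hW : ContinuousOn W N)
    (hinj : ∀ q ∈ N, ∀ q' ∈ N, q ∈ A.U i → q' ∈ A.U i → A.pr i q = A.pr i q' → W q = W q' → q = q') :
    A.Inc i p W ∨ A.Dec i p W := by
  obtain ⟨δ, hδ, hbox⟩ := A.box hp hN
  rcases lt_trichotomy (W (A.c i (A.u i p - δ/2) (A.pr i p)))
    (W (A.c i (A.u i p + δ/2) (A.pr i p))) with h | h | h
  · exact Or.inl (A.dir_aux hp W hW hinj hδ hbox h)
  · have hb := Metric.mem_ball_self (x := A.pr i p) hδ
    have := hinj _ (hbox _ _ ⟨by linarith, by linarith⟩ hb) _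
      (hbox _ _ ⟨by linarith, by linarith⟩ hb) (A.c_mem _ _ _) (A.c_mem _ _ _)
      (by rw [A.pr_c, A.pr_c]) h
    have h2 := congrArg (A.u i) this
    rw [A.u_c, A.u_c] at h2
    linarith
  · exact Or.inr (A.dir_aux (Y := Yᵒᵈ) hp W hW hinj hδ hbox h)

theorem inc_nhds {Y : Type*} [LT Y] {i : A.I} {p : X} {W : X → Y} (h : A.Inc i p W) :
    ∀ᶠ q in 𝓝 p, A.Inc i q W := by
  obtain ⟨N, hN, h⟩ := h
  filter_upwards [eventually_mem_nhds_iff.2 hN] with q hq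
  exact ⟨N, hq, h⟩

theorem dec_nhds {Y : Type*} [LT Y] {i : A.I} {p : X} {W : X → Y} (h : A.Dec i p W) :
    ∀ᶠ q in 𝓝 p, A.Dec i q W := by
  obtain ⟨N, hN, h⟩ := h
  filter_upwards [eventually_mem_nhds_iff.2 hN] with q hq
  exact ⟨N, hq, h⟩

theorem not_inc_dec {Y : Type*} [Preorder Y] {i : A.I} {p : X} (hp : p ∈ A.U i) {W : X → Y}
    (h : A.Inc i p W) (h' : A.Dec i p W) : False := by
  obtain ⟨N, hN, h⟩ := h
  obtain ⟨N', hN', h'⟩ := h'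
  obtain ⟨δ, hδ, hbox⟩ := A.box hp (inter_mem hN hN')
  have hb := Metric.mem_ball_self (x := A.pr i p) hδ
  have e1 := hbox (A.u i p) _ ⟨by linarith, by linarith⟩ hb
  have e2 := hbox (A.u i p + δ/2) _ ⟨by linarith, by linarith⟩ hb
  have a1 := h _ e1.1 _ e2.1 (A.c_mem _ _ _) (A.c_mem _ _ _) (by rw [A.pr_c, A.pr_c])
    (by rw [A.u_c, A.u_c]; linarith)
  have a2 := h' _ e1.2 _ e2.2 (A.c_mem _ _ _) (A.c_mem _ _ _) (by rw [A.pr_c, A.pr_c])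
    (by rw [A.u_c, A.u_c]; linarith)
  exact lt_asymm a1 a2

theorem dirU {i j : A.I} {p : X} (hi : p ∈ A.U i) (hj : p ∈ A.U j) :
    A.Inc i p (A.u j) ∨ A.Dec i p (A.u j) := by
  refine A.dir hi (A.u j) ((A.isOpen j).mem_nhds hj) (A.cont_u j) ?_
  intro q hq q' hq' hqi hqi' hpr hu
  exact A.ext_of hq hq' hu (A.compat i j q q' hqi hq hqi' hq' hpr)

theorem inc_of_inc {Y : Type*} [Preorder Y] {i j : A.I} {p : X} (hi : p ∈ A.U i) (hj : p ∈ A.U j)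
    {W : X → Y} (h : A.Inc i p (A.u j)) (h' : A.Inc j p W) : A.Inc i p W := by
  obtain ⟨N, hN, h⟩ := h
  obtain ⟨N', hN', h'⟩ := h'
  refine ⟨N ∩ N' ∩ A.U j, inter_mem (inter_mem hN hN') ((A.isOpen j).mem_nhds hj), ?_⟩
  intro q hq q' hq' hqi hqi' hpr hu
  exact h' q hq.1.2 q' hq'.1.2 hq.2 hq'.2 (A.compat i j q q' hqi hq.2 hqi' hq'.2 hpr)
    (h q hq.1.1 q' hq'.1.1 hqi hqi' hpr hu)

theorem dec_of_dec {Y : Type*} [Preorder Y] {i j : A.I} {p : X} (hi : p ∈ A.U i) (hj : p ∈ A.U j)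
    {W : X → Y} (h : A.Inc i p (A.u j)) (h' : A.Dec j p W) : A.Dec i p W :=
  A.inc_of_inc (Y := Yᵒᵈ) hi hj h h'

theorem dec_of_inc {Y : Type*} [Preorder Y] {i j : A.I} {p : X} (hi : p ∈ A.U i) (hj : p ∈ A.U j)
    {W : X → Y} (h : A.Dec i p (A.u j)) (h' : A.Inc j p W) : A.Dec i p W := by
  obtain ⟨N, hN, h⟩ := h
  obtain ⟨N', hN', h'⟩ := h'
  refine ⟨N ∩ N' ∩ A.U j, inter_mem (inter_mem hN hN') ((A.isOpen j).mem_nhds hj), ?_⟩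
  intro q hq q' hq' hqi hqi' hpr hu
  exact h' q' hq'.1.2 q hq.1.2 hq'.2 hq.2 (A.compat i j q q' hqi hq.2 hqi' hq'.2 hpr).symm
    (h q hq.1.1 q' hq'.1.1 hqi hqi' hpr hu)

theorem inc_of_dec {Y : Type*} [Preorder Y] {i j : A.I} {p : X} (hi : p ∈ A.U i) (hj : p ∈ A.U j)
    {W : X → Y} (h : A.Dec i p (A.u j)) (h' : A.Dec j p W) : A.Inc i p W :=
  A.dec_of_inc (Y := Yᵒᵈ) hi hj h h'

theorem inc_iff {Y : Type*} [Preorder Y] {i j : A.I} {p : X} (hi : p ∈ A.U i) (hj : p ∈ A.U j)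
    {W : X → Y} (hW : A.Inc j p W ∨ A.Dec j p W) :
    A.Inc i p W ↔ (A.Inc j p W ↔ A.Inc i p (A.u j)) := by
  have n1 := A.not_inc_dec (W := W) hi
  have n2 := A.not_inc_dec (W := W) hj
  have n3 := A.not_inc_dec (W := A.u j) hi
  have a1 := A.inc_of_inc (W := W) hi hj
  have a2 := A.dec_of_dec (W := W) hi hj
  have a3 := A.dec_of_inc (W := W) hi hj
  have a4 := A.inc_of_dec (W := W) hi hj
  have a5 := A.dirU hi hj
  tauto

theorem inc_loc {Y : Type*} [Preorder Y] {i : A.I} {p : X} (hi : p ∈ A.U i)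
    {W : X → Y} (hW : A.Inc i p W ∨ A.Dec i p W) :
    ∀ᶠ q in 𝓝 p, (A.Inc i q W ↔ A.Inc i p W) := by
  rcases hW with h | h
  · filter_upwards [A.inc_nhds h] with q hq
    exact iff_of_true hq h
  · filter_upwards [A.dec_nhds h, (A.isOpen i).mem_nhds hi] with q hq hqi
    exact iff_of_false (fun h' => A.not_inc_dec hqi h' hq) (fun h' => A.not_inc_dec hi h' h)

end FB
end

noncomputable section
set_option linter.unusedSectionVars false
set_option linter.unusedVariables false
open Set Topology Filter

namespace FB
variable {M : Type*} [TopologicalSpace M]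
  {R : Type*} [ConditionallyCompleteLinearOrder R] [DenselyOrdered R] [NoMaxOrder R] [NoMinOrder R]
  [TopologicalSpace R] [OrderTopology R]
  {E : Type*} [NormedAddCommGroup E] [NormedSpace ℝ E]
  (A : FB (M × R) E)

/-- The foliation is vertical at `(x, s)`. -/
def Vert (x : M) (s : R) : Prop :=
  ∀ i, (x, s) ∈ A.U i → ∀ᶠ s' in 𝓝 s, A.pr i (x, s') = A.pr i (x, s)

theorem vmem {i : A.I} {x : M} {s : R} (h : (x, s) ∈ A.U i) : ∀ᶠ s' in 𝓝 s, (x, s') ∈ A.U i := by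
  have : Continuous (fun s' : R => (x, s')) := by fun_prop
  exact this.continuousAt.eventually_mem ((A.isOpen i).mem_nhds h)

theorem vert_of {i : A.I} {x : M} {s : R} (h : (x, s) ∈ A.U i)
    (h' : ∀ᶠ s' in 𝓝 s, A.pr i (x, s') = A.pr i (x, s)) : A.Vert x s := by
  intro j hj
  filter_upwards [h', A.vmem h, A.vmem hj] with s' h1 h2 h3
  exact A.compat i j _ _ h2 h3 h hj h1

theorem vert_const {i : A.I} {x : M} {J : Set R} (hJ : IsPreconnected J)
    (hv : ∀ s ∈ J, A.Vert x s) (hU : ∀ s ∈ J, (x, s) ∈ A.U i) {s t : R} (hs : s ∈ J) (ht : t ∈ J) :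
    A.pr i (x, s) = A.pr i (x, t) := by
  refine hJ.induction₂ (fun s t => A.pr i (x, s) = A.pr i (x, t)) ?_ ?_ ?_ hs ht
  · intro a ha
    filter_upwards [nhdsWithin_le_nhds (hv a ha i (hU a ha))] with b hb
    exact hb.symm
  · intro a b c _ _ _ h1 h2
    exact h1.trans h2
  · intro a b _ _ h
    exact h.symm

theorem cpr {i : A.I} {p : M × R} (h : p ∈ A.U i) : ContinuousAt (A.pr i) p :=
  (A.cont_pr i).continuousAt ((A.isOpen i).mem_nhds h)

theorem vert_closed (β : R) : IsClosed {x | ∀ s, β < s → A.Vert x s} := by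
  rw [← closure_subset_iff_isClosed]
  intro x hx s hs
  obtain ⟨i, hi⟩ := A.covers (x, s)
  refine A.vert_of hi ?_
  have hn : A.U i ∈ 𝓝 x ×ˢ 𝓝 s := by rw [← nhds_prod_eq]; exact (A.isOpen i).mem_nhds hi
  obtain ⟨N, hN, T, hT, hNT⟩ := mem_prod_iff.1 hn
  obtain ⟨a, b, hab, hT'⟩ := mem_nhds_iff_exists_Ioo_subset.1 (inter_mem hT (Ioi_mem_nhds hs))
  filter_upwards [Ioo_mem_nhds hab.1 hab.2] with s' hs'
  have hU : ∀ x' ∈ N, ∀ t ∈ Ioo a b, (x', t) ∈ A.U i := fun x' hx' t ht => hNT ⟨hx', (hT' ht).1⟩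
  have hxN := mem_of_mem_nhds hN
  have hne : (𝓝[{x | ∀ s, β < s → A.Vert x s}] x).NeBot := mem_closure_iff_nhdsWithin_neBot.1 hx
  have hc : ∀ t ∈ Ioo a b, Tendsto (fun x' => A.pr i (x', t))
      (𝓝[{x | ∀ s, β < s → A.Vert x s}] x) (𝓝 (A.pr i (x, t))) := by
    intro t ht
    have h1 : ContinuousAt (fun x' : M => (x', t)) x := by fun_prop
    have h2 : ContinuousAt (fun x' => A.pr i (x', t)) x :=
      ContinuousAt.comp (f := fun x' : M => (x', t)) (A.cpr (hU x hxN t ht)) h1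
    exact h2.tendsto.mono_left nhdsWithin_le_nhds
  refine tendsto_nhds_unique_of_eventuallyEq (hc s' hs') (hc s hab) ?_
  filter_upwards [self_mem_nhdsWithin, nhdsWithin_le_nhds hN] with x' h1 h2
  exact A.vert_const isPreconnected_Ioo (fun t ht => h1 t (hT' ht).2) (hU x' h2) hs' hab

theorem vert_open (hR : ∀ f : ℕ → R, ∃ b, ∀ n, f n < b) (x₀ : M)
    (hfc : (𝓝 x₀).IsCountablyGenerated) (β : R) (hβ : ∀ s, β < s → A.Vert x₀ s) :
    ∀ᶠ x in 𝓝 x₀, ∃ b, ∀ s, b < s → A.Vert x s := by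
  obtain ⟨O, hO⟩ := (𝓝 x₀).exists_antitone_basis
  have hOev : ∀ P : M → Prop, (∀ᶠ x in 𝓝 x₀, P x) → ∃ n, ∀ x ∈ O n, P x := by
    intro P hP
    obtain ⟨n, _, hn⟩ := hO.1.mem_iff.1 hP
    exact ⟨n, hn⟩
  -- Step 1: local boxes
  have step1 : ∀ s, ∃ i f n, (x₀, s) ∈ A.U i ∧ f < s ∧
      ∀ x ∈ O n, ∀ t, f < t → t ≤ s → (x, t) ∈ A.U i := by
    intro s
    obtain ⟨i, hi⟩ := A.covers (x₀, s)
    have hn : A.U i ∈ 𝓝 x₀ ×ˢ 𝓝 s := by rw [← nhds_prod_eq]; exact (A.isOpen i).mem_nhds hi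
    obtain ⟨N, hN, T, hT, hNT⟩ := mem_prod_iff.1 hn
    obtain ⟨f, hf, hfT⟩ := exists_Ioc_subset_of_mem_nhds hT (exists_lt s)
    obtain ⟨n, hn⟩ := hOev _ hN
    exact ⟨i, f, n, hi, hf, fun x hx t h1 h2 => hNT ⟨hn x hx, hfT ⟨h1, h2⟩⟩⟩
  choose ix f n h1a h1b h1c using step1
  -- Step 2: pressing down
  obtain ⟨γ₀, hγ₀⟩ := long_press hR β f (fun s _ => h1b s)
  obtain ⟨n₀, hn₀⟩ := long_colour hR (fun k s => f s ≤ γ₀ ∧ n s = k) (fun b => by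
    obtain ⟨s, hs1, _, hs3⟩ := hγ₀ b
    exact ⟨s, hs1, n s, hs3, rfl⟩)
  obtain ⟨γ, hγ⟩ := exists_gt (max γ₀ β)
  have hγ1 : γ₀ < γ := (le_max_left _ _).trans_lt hγ
  have hγ2 : β < γ := (le_max_right _ _).trans_lt hγ
  set G := interior (O n₀) with hG
  have hGx : x₀ ∈ G := mem_interior_iff_mem_nhds.2 (hO.1.mem_of_mem trivial)
  have hGo : IsOpen G := isOpen_interior
  set S : R → Prop := fun s => ∀ x ∈ G, ∀ t, γ ≤ t → t ≤ s → (x, t) ∈ A.U (ix s) with hSdef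
  have hS : ∀ b, ∃ s, b < s ∧ S s := by
    intro b
    obtain ⟨s, hs, hs1, hs2⟩ := hn₀ b
    refine ⟨s, hs, fun x hx t ht1 ht2 => h1c s x ?_ t ((hs1.trans_lt hγ1).trans_le ht1) ht2⟩
    rw [hs2]
    exact interior_subset hx
  obtain ⟨α₀, hα₀, hSα₀⟩ := hS γ
  set Q : Set (M × R) := G ×ˢ Ioo γ α₀ with hQ
  have hQo : IsOpen Q := hGo.prod isOpen_Ioo
  have hQU : ∀ s, S s → α₀ ≤ s → ∀ q ∈ Q, q ∈ A.U (ix s) := fun s hs hs' q hq =>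
    hs q.1 hq.1 q.2 hq.2.1.le (hq.2.2.le.trans hs')
  obtain ⟨t₁, ht₁⟩ := exists_between hα₀
  -- Step 3: tubes
  have step3 : ∀ s, S s → α₀ < s → ∃ k, ∀ x ∈ O k, ∀ t ∈ Icc γ s,
      x ∈ G ∧ ∃ q ∈ Q, A.pr (ix s) q = A.pr (ix s) (x, t) := by
    intro s hs hα
    apply hOev
    refine isCompact_Icc.eventually_forall_of_forall_eventually ?_
    intro t ht
    have hU : (x₀, t) ∈ A.U (ix s) := hs x₀ hGx t ht.1 ht.2
    have hU1 : (x₀, t₁) ∈ A.U (ix s) := hs x₀ hGx t₁ ht₁.1.le (ht₁.2.le.trans hα.le)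
    have heq : A.pr (ix s) (x₀, t₁) = A.pr (ix s) (x₀, t) :=
      A.vert_const (J := Icc γ s) isPreconnected_Icc (fun t ht => hβ t (hγ2.trans_le ht.1))
        (fun t ht => hs x₀ hGx t ht.1 ht.2) ⟨ht₁.1.le, ht₁.2.le.trans hα.le⟩ ht
    have e1 : ∀ᶠ y in 𝓝 (A.pr (ix s) (x₀, t)), A.c (ix s) (A.u (ix s) (x₀, t₁)) y ∈ Q := by
      apply (A.cont_trans (ix s) _).continuousAt.eventually_mem
      rw [← heq, A.c_eq _ _ hU1]
      exact hQo.mem_nhds ⟨hGx, ht₁⟩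
    have e2 := (A.cpr hU).eventually e1
    have e3 : ∀ᶠ z : M × R in 𝓝 (x₀, t), z.1 ∈ G :=
      continuous_fst.continuousAt.eventually_mem (hGo.mem_nhds hGx)
    filter_upwards [e2, e3] with z hz1 hz2
    exact ⟨hz2, _, hz1, A.pr_c _ _ _⟩
  -- Step 4
  obtain ⟨k₀, hk₀⟩ := long_colour hR (fun k s => S s ∧ α₀ < s ∧ ∀ x ∈ O k, ∀ t ∈ Icc γ s,
      x ∈ G ∧ ∃ q ∈ Q, A.pr (ix s) q = A.pr (ix s) (x, t)) (fun b => by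
    obtain ⟨s, hs, hs'⟩ := hS (max b α₀)
    have h1 : b < s := (le_max_left _ _).trans_lt hs
    have h2 : α₀ < s := (le_max_right _ _).trans_lt hs
    obtain ⟨k, hk⟩ := step3 s hs' h2
    exact ⟨s, h1, k, hs', h2, hk⟩)
  -- Step 5
  filter_upwards [hO.1.mem_of_mem (i := k₀) trivial] with x hx
  have hxG : x ∈ G := by
    obtain ⟨s, hs, hs1, hs2, hs3⟩ := hk₀ γ
    exact (hs3 x hx γ ⟨le_refl _, hs.le⟩).1
  have hex : ∀ t, ∃ q, γ ≤ t → q ∈ Q ∧ ∀ s, S s → α₀ < s → t ≤ s →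
      A.pr (ix s) q = A.pr (ix s) (x, t) := by
    intro t
    by_cases ht : γ ≤ t
    · obtain ⟨s, hs, hs1, hs2, hs3⟩ := hk₀ t
      obtain ⟨_, q, hq, hpr⟩ := hs3 x hx t ⟨ht, hs.le⟩
      refine ⟨q, fun _ => ⟨hq, fun s' hs1' hs2' hts' => ?_⟩⟩
      exact A.compat (ix s) (ix s') _ _ (hQU s hs1 hs2.le q hq) (hQU s' hs1' hs2'.le q hq)
        (hs1 x hxG t ht hs.le) (hs1' x hxG t ht hts') hpr
    · exact ⟨(x, t), fun h => absurd h ht⟩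
  choose q hq using hex
  have hcont : ContinuousOn (fun t => A.pr (ix α₀) (q t)) (Ioi γ) := by
    intro t ht
    have ht : γ < t := ht
    apply ContinuousAt.continuousWithinAt
    obtain ⟨s, hs, hs1, hs2, _⟩ := hk₀ t
    have hqt := hq t ht.le
    have hqU := hQU s hs1 hs2.le _ hqt.1
    have hxU : (x, t) ∈ A.U (ix s) := hs1 x hxG t ht.le hs.le
    have hval : A.c (ix s) (A.u (ix s) (q t)) (A.pr (ix s) (x, t)) = q t := by
      rw [← hqt.2 s hs1 hs2 hs.le, A.c_eq _ _ hqU]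
    have k1 : ContinuousAt (fun t' : R => (x, t')) t := by fun_prop
    have k2 : ContinuousAt (fun t' => A.pr (ix s) (x, t')) t :=
      ContinuousAt.comp (f := fun t' : R => (x, t')) (A.cpr hxU) k1
    have k3 : ContinuousAt (fun t' => A.c (ix s) (A.u (ix s) (q t)) (A.pr (ix s) (x, t'))) t :=
      ContinuousAt.comp (f := fun t' => A.pr (ix s) (x, t'))
        (A.cont_trans (ix s) (A.u (ix s) (q t))).continuousAt k2
    have k4 : ContinuousAt
        (fun t' => A.pr (ix α₀) (A.c (ix s) (A.u (ix s) (q t)) (A.pr (ix s) (x, t')))) t := by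
      refine ContinuousAt.comp
        (f := fun t' => A.c (ix s) (A.u (ix s) (q t)) (A.pr (ix s) (x, t'))) ?_ k3
      simp only [hval]
      exact A.cpr (hQU α₀ hSα₀ le_rfl _ hqt.1)
    refine k4.congr ?_
    have k5 := k3.eventually_mem (by simp only [hval]; exact hQo.mem_nhds hqt.1)
    filter_upwards [k5, Ioo_mem_nhds ht hs] with t' h1 h2
    have hqt' := hq t' h2.1.le
    refine A.compat (ix s) (ix α₀) _ _ (A.c_mem _ _ _) (hQU α₀ hSα₀ le_rfl _ h1)
      (hQU s hs1 hs2.le _ hqt'.1) (hQU α₀ hSα₀ le_rfl _ hqt'.1) ?_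
    rw [A.pr_c, hqt'.2 s hs1 hs2 h2.2.le]
  obtain ⟨b, hb1, hb2⟩ := long_evconst hR γ _ hcont
  refine ⟨b, fun t ht => ?_⟩
  obtain ⟨s, hs, hs1, hs2, _⟩ := hk₀ t
  have hγt := hb1.trans ht
  refine A.vert_of (i := ix s) (hs1 x hxG t hγt.le hs.le) ?_
  filter_upwards [Ioo_mem_nhds ht hs] with t' ht'
  have hqt := hq t hγt.le
  have hqt' := hq t' (hb1.trans ht'.1).le
  rw [← hqt.2 s hs1 hs2 hs.le, ← hqt'.2 s hs1 hs2 ht'.2.le]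
  refine A.compat (ix α₀) (ix s) _ _ (hQU α₀ hSα₀ le_rfl _ hqt'.1) (hQU s hs1 hs2.le _ hqt'.1)
    (hQU α₀ hSα₀ le_rfl _ hqt.1) (hQU s hs1 hs2.le _ hqt.1) ?_
  exact (hb2 t' ht'.1.le).trans (hb2 t ht.le).symm

theorem vert_all [ConnectedSpace M] [TopologicalSpace.SeparableSpace M]
    (hR : ∀ f : ℕ → R, ∃ b, ∀ n, f n < b)
    (hfc : ∀ x : M, (𝓝 x).IsCountablyGenerated) (x₀ : M) (β : R)
    (hβ : ∀ s, β < s → A.Vert x₀ s) : ∃ b, ∀ x s, b < s → A.Vert x s := by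
  have : FirstCountableTopology M := ⟨hfc⟩
  set V : Set M := {x | ∃ b, ∀ s, b < s → A.Vert x s} with hV
  have hopen : IsOpen V := isOpen_iff_mem_nhds.2 (fun x ⟨b, hb⟩ => A.vert_open hR x (hfc x) b hb)
  have hseq : ∀ f : ℕ → M, (∀ n, f n ∈ V) →
      ∃ b, range f ⊆ {x | ∀ s, b < s → A.Vert x s} := by
    intro f hf
    choose b hb using hf
    obtain ⟨B, hB⟩ := hR b
    refine ⟨B, ?_⟩
    rintro _ ⟨n, rfl⟩ s hs
    exact hb n s ((hB n).trans hs)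
  have hclosed : IsClosed V := by
    rw [← closure_subset_iff_isClosed]
    intro x hx
    obtain ⟨f, hf, hfx⟩ := mem_closure_iff_seq_limit.1 hx
    obtain ⟨b, hb⟩ := hseq f hf
    exact ⟨b, (A.vert_closed b).mem_of_tendsto hfx (Eventually.of_forall fun n => hb ⟨n, rfl⟩)⟩
  have huniv : V = univ := IsClopen.eq_univ ⟨hclosed, hopen⟩ ⟨x₀, β, hβ⟩
  have : Nonempty M := ⟨x₀⟩
  obtain ⟨b, hb⟩ := hseq (TopologicalSpace.denseSeq M) (fun n => by rw [huniv]; trivial)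
  refine ⟨b, fun x => ?_⟩
  have h1 := (A.vert_closed b).closure_subset_iff.2 hb
  rw [(TopologicalSpace.denseRange_denseSeq M).closure_range] at h1
  exact h1 (mem_univ x)

end FB
end

noncomputable section
set_option linter.unusedSectionVars false
set_option linter.unusedVariables false
open Set Topology Filter

namespace FB
variable {M : Type*} [TopologicalSpace M]
  {R : Type*} [ConditionallyCompleteLinearOrder R] [DenselyOrdered R] [NoMaxOrder R] [NoMinOrder R]
  [TopologicalSpace R] [OrderTopology R]
  {E : Type*} [NormedAddCommGroup E] [NormedSpace ℝ E]
  (A : FB (M × R) E)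

theorem vert_fst_loc {i : A.I} {y : E} {a : ℝ}
    (hv : A.Vert (A.c i a y).1 (A.c i a y).2) :
    ∀ᶠ a' in 𝓝 a, (A.c i a' y).1 = (A.c i a y).1 := by
  obtain ⟨x, s, hxs⟩ : ∃ x s, A.c i a y = (x, s) := ⟨_, _, rfl⟩
  have hU : (x, s) ∈ A.U i := hxs ▸ A.c_mem i a y
  have hy : A.pr i (x, s) = y := hxs ▸ A.pr_c i a y
  have hu : A.u i (x, s) = a := hxs ▸ A.u_c i a y
  rw [hxs] at hv ⊢
  have hv' := hv i hU
  obtain ⟨l, r, hlr, hsub⟩ := mem_nhds_iff_exists_Ioo_subset.1 (inter_mem hv' (A.vmem hU))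
  obtain ⟨l', hl1, hl2⟩ := exists_between hlr.1
  obtain ⟨r', hr1, hr2⟩ := exists_between hlr.2
  have hc : ContinuousOn (fun t => A.u i (x, t)) (Ioo l r) :=
    (A.cont_u i).comp (by fun_prop : Continuous fun t : R => (x, t)).continuousOn
      (fun t ht => (hsub ht).2)
  have hinj : InjOn (fun t => A.u i (x, t)) (Ioo l r) := by
    intro t ht t' ht' h
    have h1 : A.pr i (x, t) = A.pr i (x, t') := (hsub ht).1.trans (hsub ht').1.symm
    have := A.ext_of (hsub ht).2 (hsub ht').2 h h1
    exact congrArg Prod.snd this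
  have ml : l' ∈ Ioo l r := ⟨hl1, hl2.trans hlr.2⟩
  have mr : r' ∈ Ioo l r := ⟨hlr.1.trans hr1, hr2⟩
  have hsubI : uIcc l' r' ⊆ Ioo l r := by
    rw [uIcc_of_le (hl2.trans hr1).le]
    exact Icc_subset_Ioo hl1 hr2
  have hiv := intermediate_value_uIcc (hc.mono hsubI)
  have hn : uIcc (A.u i (x, l')) (A.u i (x, r')) ∈ 𝓝 a := by
    rcases hc.strictMonoOn_of_injOn_Ioo (hlr.1.trans hlr.2) hinj with h | h
    · have h1 := h ml hlr hl2
      have h2 := h hlr mr hr1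
      simp only [hu] at h1 h2
      rw [uIcc_of_le (h1.trans h2).le]
      exact Icc_mem_nhds h1 h2
    · have h1 := h ml hlr hl2
      have h2 := h hlr mr hr1
      simp only [hu] at h1 h2
      rw [uIcc_of_ge (h2.trans h1).le]
      exact Icc_mem_nhds h2 h1
  filter_upwards [hn] with a' ha'
  obtain ⟨t, ht, hta⟩ := hiv ha'
  have ht' := hsub (hsubI ht)
  have h1 : A.pr i (x, t) = y := ht'.1.trans hy
  have h2 := A.c_eq i _ ht'.2
  simp only at hta
  rw [h1, hta] at h2
  rw [h2]

theorem vert_dir {β : R} (hv : ∀ x s, β < s → A.Vert x s) {i : A.I} {p : M × R} (hp : p ∈ A.U i)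
    (hβ : β < p.2) : A.Inc i p Prod.snd ∨ A.Dec i p Prod.snd := by
  obtain ⟨δ, hδ, hbox⟩ := A.box hp
    ((isOpen_Ioi.preimage continuous_snd).mem_nhds hβ : Prod.snd ⁻¹' Ioi β ∈ 𝓝 p)
  refine A.dir hp Prod.snd (A.box_nhds hp hδ) continuous_snd.continuousOn ?_
  rintro q ⟨_, hq1, hq2⟩ q' ⟨_, hq1', _⟩ hq hq' hpr hW
  have key : (A.c i (A.u i q) (A.pr i q)).1 = (A.c i (A.u i q') (A.pr i q)).1 := by
    refine (isPreconnected_Ioo (a := A.u i p - δ) (b := A.u i p + δ)).induction₂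
      (fun a b => (A.c i a (A.pr i q)).1 = (A.c i b (A.pr i q)).1) ?_ ?_ ?_ hq1 hq1'
    · intro a ha
      filter_upwards [nhdsWithin_le_nhds
        (A.vert_fst_loc (i := i) (y := A.pr i q) (a := a) (hv _ _ (hbox a _ ha hq2)))] with b hb
      exact hb.symm
    · intro a b c _ _ _ h1 h2
      exact h1.trans h2
    · intro a b _ _ h
      exact h.symm
  rw [A.c_eq i q hq, hpr, A.c_eq i q' hq'] at key
  exact Prod.ext key hW

/-- `o` is a coherent orientation at `p`, going upwards above `β`. -/
def IsOr (β : R) (o : M × R → A.I → Prop) (p : M × R) : Prop :=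
  (∀ i j, p ∈ A.U i → p ∈ A.U j → (o p i ↔ (o p j ↔ A.Inc i p (A.u j)))) ∧
  (∀ i, p ∈ A.U i → ∀ᶠ q in 𝓝 p, (o q i ↔ o p i)) ∧
  (β < p.2 → ∀ i, p ∈ A.U i → (o p i ↔ A.Inc i p Prod.snd))

theorem isOr_base {β : R} (hv : ∀ x s, β < s → A.Vert x s) {p : M × R} (hβ : β < p.2) :
    A.IsOr β (fun p i => A.Inc i p Prod.snd) p :=
  ⟨fun _ _ hi hj => A.inc_iff hi hj (A.vert_dir hv hj hβ),
    fun _ hi => A.inc_loc hi (A.vert_dir hv hi hβ), fun _ _ _ => Iff.rfl⟩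

theorem isOr_congr {β : R} {o o' : M × R → A.I → Prop} {p : M × R}
    (h : ∀ᶠ q in 𝓝 p, ∀ i, q ∈ A.U i → (o' q i ↔ o q i)) (ho : A.IsOr β o p) : A.IsOr β o' p := by
  have hp := h.self_of_nhds
  refine ⟨fun i j hi hj => ?_, fun i hi => ?_, fun hβ i hi => ?_⟩
  · rw [hp i hi, hp j hj]
    exact ho.1 i j hi hj
  · filter_upwards [h, ho.2.1 i hi, (A.isOpen i).mem_nhds hi] with q h1 h2 h3
    rw [h1 i h3, h2, hp i hi]
  · rw [hp i hi]
    exact ho.2.2 hβ i hi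

theorem isOr_vconst {β : R} {o : M × R → A.I → Prop} {i : A.I} {x : M} {J : Set R}
    (hJ : IsPreconnected J) (hU : ∀ s ∈ J, (x, s) ∈ A.U i) (ho : ∀ s ∈ J, A.IsOr β o (x, s))
    {s t : R} (hs : s ∈ J) (ht : t ∈ J) : o (x, s) i ↔ o (x, t) i := by
  refine hJ.induction₂ (fun s t => o (x, s) i ↔ o (x, t) i) ?_ ?_ ?_ hs ht
  · intro a ha
    have hc : ContinuousAt (fun t : R => (x, t)) a := by fun_prop
    filter_upwards [nhdsWithin_le_nhds (hc.eventually ((ho a ha).2.1 i (hU a ha)))] with b hb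
    exact hb.symm
  · intro a b c _ _ _ h1 h2
    exact h1.trans h2
  · intro a b _ _ h
    exact h.symm

theorem isOr_unique {β : R} {o o' : M × R → A.I → Prop} {x : M} {s : R}
    (ho : ∀ t, s < t → A.IsOr β o (x, t)) (ho' : ∀ t, s < t → A.IsOr β o' (x, t)) {t : R}
    (ht : s < t) {i : A.I} (hi : (x, t) ∈ A.U i) : o (x, t) i ↔ o' (x, t) i := by
  set D : R → Prop := fun t => ∀ i, (x, t) ∈ A.U i → (o (x, t) i ↔ o' (x, t) i) with hD
  have hD1 : ∀ t, s < t → ∀ i, (x, t) ∈ A.U i → (D t ↔ (o (x, t) i ↔ o' (x, t) i)) := by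
    intro t ht i hi
    refine ⟨fun h => h i hi, fun h j hj => ?_⟩
    rw [(ho t ht).1 j i hj hi, (ho' t ht).1 j i hj hi, h]
  obtain ⟨t₀, ht₀⟩ := exists_gt (max s β)
  have hs₀ : s < t₀ := (le_max_left _ _).trans_lt ht₀
  have hβ₀ : β < t₀ := (le_max_right _ _).trans_lt ht₀
  have hD0 : D t₀ := fun i hi => ((ho t₀ hs₀).2.2 hβ₀ i hi).trans ((ho' t₀ hs₀).2.2 hβ₀ i hi).symm
  have key : D t₀ ↔ D t := by
    refine (isPreconnected_Ioi (a := s)).induction₂ (fun a b => D a ↔ D b) ?_ ?_ ?_ hs₀ ht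
    · intro a ha
      obtain ⟨j, hj⟩ := A.covers (x, a)
      have hc : ContinuousAt (fun t : R => (x, t)) a := by fun_prop
      filter_upwards [nhdsWithin_le_nhds (hc.eventually ((ho a ha).2.1 j hj)),
        nhdsWithin_le_nhds (hc.eventually ((ho' a ha).2.1 j hj)),
        nhdsWithin_le_nhds (A.vmem hj), self_mem_nhdsWithin] with b h1 h2 h3 h4
      rw [hD1 a ha j hj, hD1 b h4 j h3, h1, h2]
    · intro a b c _ _ _ h1 h2
      exact h1.trans h2
    · intro a b _ _ h
      exact h.symm
  exact key.1 hD0 i hi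

/-- local existence of orientation near the fibre over `x` above height `s` -/
def Good (β : R) (x : M) (s : R) : Prop :=
  ∃ V : Set M, IsOpen V ∧ x ∈ V ∧ ∃ o : M × R → A.I → Prop,
    ∀ p : M × R, p.1 ∈ V → s < p.2 → A.IsOr β o p

theorem good_step {β : R} {x : M} {s₁ a b : R} (hs : A.Good β x s₁) (hβ : s₁ ≤ β) (hb : s₁ < b)
    (i : A.I) {V' : Set M} (hV' : IsOpen V') (hx' : x ∈ V')
    (hU : ∀ x ∈ V', ∀ t ∈ Ioo a b, (x, t) ∈ A.U i) (ha : a < s₁) : A.Good β x a := by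
  classical
  obtain ⟨V, hV, hxV, o, ho⟩ := hs
  obtain ⟨s₂, hs₂, hs₂b⟩ := exists_between hb
  refine ⟨V ∩ V', hV.inter hV', ⟨hxV, hx'⟩, fun p j => if s₁ < p.2 then o p j else
    (o (p.1, s₂) i ↔ A.Inc j p (A.u i)), ?_⟩
  rintro ⟨z, t⟩ ⟨hz, hz'⟩ ht
  simp only at hz hz' ht
  by_cases hst : s₁ < t
  · refine A.isOr_congr ?_ (ho (z, t) hz hst)
    filter_upwards [(isOpen_Ioi.preimage continuous_snd).mem_nhds
      (show (z, t) ∈ Prod.snd ⁻¹' Ioi s₁ from hst)] with q hq k hk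
    have hq' : s₁ < q.2 := hq
    simp only [if_pos hq']
  · have htb : t < b := (not_lt.1 hst).trans_lt hb
    -- uniform formula
    have form : ∀ q : M × R, q.1 ∈ V → q.1 ∈ V' → q.2 ∈ Ioo a b → ∀ j, q ∈ A.U j →
        ((if s₁ < q.2 then o q j else (o (q.1, s₂) i ↔ A.Inc j q (A.u i))) ↔
          (o (q.1, s₂) i ↔ A.Inc j q (A.u i))) := by
      rintro ⟨w, r⟩ hw hw' hr j hj
      simp only at hw hw' hr ⊢
      split_ifs with h
      · rw [(ho (w, r) hw h).1 j i hj (hU w hw' r hr)]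
        rw [A.isOr_vconst (β := β) (o := o) (i := i) (x := w) (isPreconnected_Ioo (a := s₁) (b := b))
          (fun s hs => hU w hw' s ⟨ha.trans hs.1, hs.2⟩) (fun s hs => ho (w, s) hw hs.1)
          (s := r) (t := s₂) ⟨h, hr.2⟩ ⟨hs₂, hs₂b⟩]
      · exact Iff.rfl
    have hzi : (z, t) ∈ A.U i := hU z hz' t ⟨ht, htb⟩
    refine ⟨fun j k hj hk => ?_, fun j hj => ?_, fun h => absurd (hβ.trans_lt h) hst⟩
    · beta_reduce
      rw [form (z, t) hz hz' ⟨ht, htb⟩ j hj, form (z, t) hz hz' ⟨ht, htb⟩ k hk,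
        A.inc_iff (W := A.u i) hj hk (A.dirU hk hzi)]
      tauto
    · have hc : ContinuousAt (fun q : M × R => (q.1, s₂)) (z, t) := by fun_prop
      have e1 := hc.eventually ((ho (z, s₂) hz hs₂).2.1 i
        (hU z hz' s₂ ⟨ha.trans hs₂, hs₂b⟩))
      have e2 := A.inc_loc hj (A.dirU hj hzi)
      have e3 : ∀ᶠ q : M × R in 𝓝 (z, t), q.1 ∈ V ∩ V' :=
        continuous_fst.continuousAt.eventually_mem ((hV.inter hV').mem_nhds ⟨hz, hz'⟩)
      have e4 : ∀ᶠ q : M × R in 𝓝 (z, t), q.2 ∈ Ioo a b :=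
        continuous_snd.continuousAt.eventually_mem (Ioo_mem_nhds ht htb)
      filter_upwards [e1, e2, e3, e4, (A.isOpen j).mem_nhds hj] with q h1 h2 h3 h4 h5
      rw [form q h3.1 h3.2 h4 j h5, form (z, t) hz hz' ⟨ht, htb⟩ j hj, h1, h2]

theorem good_all {β : R} (hv : ∀ x s, β < s → A.Vert x s) (x : M) (s : R) : A.Good β x s := by
  by_contra hns
  set T : Set R := {s | A.Good β x s} with hT
  have hup : ∀ a b, a ∈ T → a ≤ b → b ∈ T := by
    rintro a b ⟨V, hV, hx, o, ho⟩ hab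
    exact ⟨V, hV, hx, o, fun p h1 h2 => ho p h1 (hab.trans_lt h2)⟩
  have hβT : β ∈ T := ⟨univ, isOpen_univ, mem_univ _, _, fun p _ h => A.isOr_base hv h⟩
  have hbd : BddBelow T := ⟨s, fun t ht => by
    by_contra h
    exact hns (hup t s ht (not_le.1 h).le)⟩
  obtain ⟨i, hi⟩ := A.covers (x, sInf T)
  have hn : A.U i ∈ 𝓝 x ×ˢ 𝓝 (sInf T) := by rw [← nhds_prod_eq]; exact (A.isOpen i).mem_nhds hi
  obtain ⟨N, hN, S, hS, hNS⟩ := mem_prod_iff.1 hn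
  obtain ⟨a, b, hab, hS'⟩ := mem_nhds_iff_exists_Ioo_subset.1 hS
  obtain ⟨t, ht, htb⟩ := exists_lt_of_csInf_lt ⟨β, hβT⟩ hab.2
  have hm : min t β ∈ T := by
    rcases min_choice t β with h | h <;> rw [h] <;> assumption
  have hlt : a < min t β := hab.1.trans_le (csInf_le hbd hm)
  have := A.good_step hm (min_le_right _ _) ((min_le_left _ _).trans_lt htb) i
    isOpen_interior (mem_interior_iff_mem_nhds.2 hN)
    (fun z hz r hr => hNS ⟨interior_subset hz, hS' hr⟩) hlt
  exact absurd (csInf_le hbd this) (not_le.2 hab.1)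

theorem exists_orientation {β : R} (hv : ∀ x s, β < s → A.Vert x s) :
    ∃ o : M × R → A.I → Prop, ∀ p, A.IsOr β o p := by
  refine ⟨fun p j => ∃ (V : Set M) (s : R) (o : M × R → A.I → Prop), IsOpen V ∧ p.1 ∈ V ∧ s < p.2 ∧
    (∀ q : M × R, q.1 ∈ V → s < q.2 → A.IsOr β o q) ∧ o p j, ?_⟩
  rintro ⟨x, t⟩
  obtain ⟨a, ha⟩ := exists_lt t
  obtain ⟨V, hV, hx, o, ho⟩ := A.good_all hv x a
  refine A.isOr_congr ?_ (ho (x, t) hx ha)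
  have e3 : ∀ᶠ q : M × R in 𝓝 (x, t), q.1 ∈ V :=
    continuous_fst.continuousAt.eventually_mem (hV.mem_nhds hx)
  have e4 : ∀ᶠ q : M × R in 𝓝 (x, t), q.2 ∈ Ioi a :=
    continuous_snd.continuousAt.eventually_mem (Ioi_mem_nhds ha)
  filter_upwards [e3, e4]
  rintro ⟨z, r⟩ h1 h2 j hj
  constructor
  · rintro ⟨V', s', o', hV', hz', hs', ho', h⟩
    simp only at hz' hs' h1 h2
    refine (A.isOr_unique (β := β) (o := o') (o' := o) (x := z) (s := max s' a) (t := r)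
      (fun t ht => ho' (z, t) hz' ((le_max_left _ _).trans_lt ht))
      (fun t ht => ho (z, t) h1 ((le_max_right _ _).trans_lt ht)) (max_lt hs' h2) hj).1 h
  · intro h
    exact ⟨V, a, o, hV, h1, h2, ho, h⟩

end FB
end

noncomputable section
set_option linter.unusedSectionVars false
set_option linter.unusedVariables false
open Set Topology Filter

theorem exists_gt_of_ev {t : ClosedLongRay} {P : ClosedLongRay → Prop} (h : ∀ᶠ t' in 𝓝 t, P t') :
    ∃ t', t < t' ∧ P t' := by
  have h1 : ∀ᶠ t' in 𝓝[>] t, P t' := h.filter_mono nhdsWithin_le_nhds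
  obtain ⟨t', h2, h3⟩ := (h1.and self_mem_nhdsWithin).exists
  exact ⟨t', h3, h2⟩

theorem LongLine.nhds_pair {t : LongLine} {N : Set LongLine} (hN : N ∈ 𝓝 t) :
    ∃ t₁ ∈ N, ∃ t₂ ∈ N, t₁ < t₂ := by
  rcases LongLine.exists_cover t with ⟨x, rfl⟩ | ⟨x, rfl⟩
  · obtain ⟨y, hy, hy'⟩ := exists_gt_of_ev
      (LongLine.continuous_pos.continuousAt.eventually_mem hN)
    exact ⟨_, mem_of_mem_nhds hN, _, hy', LongLine.pos_strictMono hy⟩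
  · obtain ⟨y, hy, hy'⟩ := exists_gt_of_ev
      (LongLine.continuous_negHalf.continuousAt.eventually_mem hN)
    exact ⟨_, hy', _, mem_of_mem_nhds hN, LongLine.negHalf_strictAnti hy⟩

namespace FB
variable {M : Type*} [TopologicalSpace M]
  {E : Type*} [NormedAddCommGroup E] [NormedSpace ℝ E]
  (A : FB (M × LongRay) E) (h : LongLine → M × LongRay)

/-- leaf parametrisation is increasing in chart `i` near `t` -/
def HInc (i : A.I) (t : LongLine) : Prop :=
  ∃ N ∈ 𝓝 t, ∀ t₁ ∈ N, ∀ t₂ ∈ N, t₁ < t₂ → A.u i (h t₁) < A.u i (h t₂)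

/-- leaf parametrisation is decreasing in chart `i` near `t` -/
def HDec (i : A.I) (t : LongLine) : Prop :=
  ∃ N ∈ 𝓝 t, ∀ t₁ ∈ N, ∀ t₂ ∈ N, t₁ < t₂ → A.u i (h t₂) < A.u i (h t₁)

/-- `h` is a parametrisation of a leaf by the long line -/
structure IsParam : Prop where
  plq : ∀ i t, h t ∈ A.U i → ∀ᶠ t' in 𝓝 t, h t' ∈ A.U i ∧ A.pr i (h t') = A.pr i (h t)
  cont : Continuous h
  inj : Function.Injective h
  hdir : ∀ i t, h t ∈ A.U i → A.HInc h i t ∨ A.HDec h i t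

variable {A h}

theorem not_hinc_hdec {i : A.I} {t : LongLine} (h1 : A.HInc h i t) (h2 : A.HDec h i t) : False := by
  obtain ⟨N, hN, h1⟩ := h1
  obtain ⟨N', hN', h2⟩ := h2
  obtain ⟨a, ha, b, hb, hab⟩ := LongLine.nhds_pair (inter_mem hN hN')
  exact lt_asymm (h1 a ha.1 b hb.1 hab) (h2 a ha.2 b hb.2 hab)

theorem hinc_nhds {i : A.I} {t : LongLine} (h1 : A.HInc h i t) : ∀ᶠ t' in 𝓝 t, A.HInc h i t' := by
  obtain ⟨N, hN, h1⟩ := h1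
  filter_upwards [eventually_mem_nhds_iff.2 hN] with q hq
  exact ⟨N, hq, h1⟩

theorem hdec_nhds {i : A.I} {t : LongLine} (h1 : A.HDec h i t) : ∀ᶠ t' in 𝓝 t, A.HDec h i t' := by
  obtain ⟨N, hN, h1⟩ := h1
  filter_upwards [eventually_mem_nhds_iff.2 hN] with q hq
  exact ⟨N, hq, h1⟩

theorem IsParam.hinc_loc (H : A.IsParam h) {i : A.I} {t : LongLine} (hi : h t ∈ A.U i) :
    ∀ᶠ t' in 𝓝 t, (A.HInc h i t' ↔ A.HInc h i t) := by
  rcases H.hdir i t hi with h1 | h1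
  · filter_upwards [hinc_nhds h1] with q hq
    exact iff_of_true hq h1
  · filter_upwards [hdec_nhds h1] with q hq
    exact iff_of_false (fun h' => not_hinc_hdec h' hq) (fun h' => not_hinc_hdec h' h1)

theorem IsParam.pair (H : A.IsParam h) {i : A.I} {t : LongLine} (hi : h t ∈ A.U i)
    {N : Set (M × LongRay)} (hN : N ∈ 𝓝 (h t)) :
    {t' | h t' ∈ N ∧ h t' ∈ A.U i ∧ A.pr i (h t') = A.pr i (h t)} ∈ 𝓝 t := by
  filter_upwards [H.plq i t hi, H.cont.continuousAt.eventually_mem hN] with t' h1 h2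
  exact ⟨h2, h1⟩

theorem IsParam.hinc_iff (H : A.IsParam h) {i j : A.I} {t : LongLine} (hi : h t ∈ A.U i)
    (hj : h t ∈ A.U j) : A.HInc h j t ↔ (A.HInc h i t ↔ A.Inc i (h t) (A.u j)) := by
  have a1 : A.Inc i (h t) (A.u j) → A.HInc h i t → A.HInc h j t := by
    rintro ⟨N, hN, k1⟩ ⟨N', hN', k2⟩
    refine ⟨_, inter_mem (H.pair hi hN) hN', fun t₁ h₁ t₂ h₂ hlt => ?_⟩
    exact k1 _ h₁.1.1 _ h₂.1.1 h₁.1.2.1 h₂.1.2.1 (h₁.1.2.2.trans h₂.1.2.2.symm)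
      (k2 _ h₁.2 _ h₂.2 hlt)
  have a2 : A.Inc i (h t) (A.u j) → A.HDec h i t → A.HDec h j t := by
    rintro ⟨N, hN, k1⟩ ⟨N', hN', k2⟩
    refine ⟨_, inter_mem (H.pair hi hN) hN', fun t₁ h₁ t₂ h₂ hlt => ?_⟩
    exact k1 _ h₂.1.1 _ h₁.1.1 h₂.1.2.1 h₁.1.2.1 (h₂.1.2.2.trans h₁.1.2.2.symm)
      (k2 _ h₁.2 _ h₂.2 hlt)
  have a3 : A.Dec i (h t) (A.u j) → A.HInc h i t → A.HDec h j t := by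
    rintro ⟨N, hN, k1⟩ ⟨N', hN', k2⟩
    refine ⟨_, inter_mem (H.pair hi hN) hN', fun t₁ h₁ t₂ h₂ hlt => ?_⟩
    exact k1 _ h₁.1.1 _ h₂.1.1 h₁.1.2.1 h₂.1.2.1 (h₁.1.2.2.trans h₂.1.2.2.symm)
      (k2 _ h₁.2 _ h₂.2 hlt)
  have a4 : A.Dec i (h t) (A.u j) → A.HDec h i t → A.HInc h j t := by
    rintro ⟨N, hN, k1⟩ ⟨N', hN', k2⟩
    refine ⟨_, inter_mem (H.pair hi hN) hN', fun t₁ h₁ t₂ h₂ hlt => ?_⟩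
    exact k1 _ h₂.1.1 _ h₁.1.1 h₂.1.2.1 h₁.1.2.1 (h₂.1.2.2.trans h₁.1.2.2.symm)
      (k2 _ h₁.2 _ h₂.2 hlt)
  have n1 := not_hinc_hdec (A := A) (h := h) (i := i) (t := t)
  have n2 := not_hinc_hdec (A := A) (h := h) (i := j) (t := t)
  have n3 := A.not_inc_dec (W := A.u j) hi
  have d1 := A.dirU hi hj
  have d2 := H.hdir i t hi
  tauto

variable (A h) in
/-- `h` runs positively with respect to `o` at `t` -/
def Pos (o : M × LongRay → A.I → Prop) (t : LongLine) : Prop :=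
  ∀ i, h t ∈ A.U i → (o (h t) i ↔ A.HInc h i t)

theorem IsParam.pos_iff (H : A.IsParam h) {β : LongRay} {o : M × LongRay → A.I → Prop}
    (ho : ∀ p, A.IsOr β o p) {i : A.I} {t : LongLine} (hi : h t ∈ A.U i) :
    A.Pos h o t ↔ (o (h t) i ↔ A.HInc h i t) := by
  refine ⟨fun k => k i hi, fun k j hj => ?_⟩
  have h1 := (ho (h t)).1 i j hi hj
  have h2 := H.hinc_iff hi hj
  tauto

theorem IsParam.pos_const (H : A.IsParam h) {β : LongRay} {o : M × LongRay → A.I → Prop}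
    (ho : ∀ p, A.IsOr β o p) {j : ClosedLongRay → LongLine} (hj : Continuous j)
    (a b : ClosedLongRay) : A.Pos h o (j a) ↔ A.Pos h o (j b) := by
  refine (isPreconnected_univ (α := ClosedLongRay)).induction₂
    (fun a b => A.Pos h o (j a) ↔ A.Pos h o (j b)) ?_ ?_ ?_ (mem_univ a) (mem_univ b)
  · intro a _
    obtain ⟨i, hi⟩ := A.covers (h (j a))
    have e1 := H.cont.continuousAt.eventually ((ho (h (j a))).2.1 i hi)
    have e2 := H.hinc_loc hi
    have e3 := H.plq i (j a) hi
    filter_upwards [nhdsWithin_le_nhds (hj.continuousAt.eventually (e1.and (e2.and e3)))]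
      with b hb
    rw [H.pos_iff ho hi, H.pos_iff ho hb.2.2.1, hb.1, hb.2.1]
  · intro a b c _ _ _ h1 h2
    exact h1.trans h2
  · intro a b _ _ h
    exact h.symm

theorem IsParam.ends (H : A.IsParam h) (hsq : Squat M)
    (hfR : ∀ s : LongRay, (𝓝 s).IsCountablyGenerated)
    {j : ClosedLongRay → LongLine} (hj : Continuous j) (hji : Function.Injective j) :
    ∃ x₀ t₁, (∀ t, t₁ ≤ t → (h (j t)).1 = x₀) ∧ StrictMonoOn (fun t => (h (j t)).2) (Ici t₁) ∧
      ∀ c, ∃ t, t₁ ≤ t ∧ c < (h (j t)).2 := by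
  have hg : Continuous (fun t => h (j t)) := H.cont.comp hj
  obtain ⟨b, x₀, hb⟩ := hsq (fun a => (h (j a.toCLR)).1)
    (continuous_fst.comp (hg.comp LongRay.continuous_toCLR))
  have hx : ∀ t, b.toCLR ≤ t → (h (j t)).1 = x₀ := by
    intro t ht
    obtain ⟨y, hy⟩ := b.2
    exact hb ⟨t, y, lt_of_lt_of_le hy ht⟩ ht
  have hinj : InjOn (fun t => (h (j t)).2) (Ici b.toCLR) := by
    intro t ht t' ht' hh
    exact hji (H.inj (Prod.ext ((hx t ht).trans (hx t' ht').symm) hh))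
  have hm : StrictMonoOn (fun t => (h (j t)).2) (Ici b.toCLR) := by
    rcases inj_mono_or_anti b.toCLR (fun t => (h (j t)).2)
      (continuous_snd.comp hg).continuousOn hinj with k | k
    · exact k
    · exact (clr_no_anti _ _ k).elim
  exact ⟨x₀, b.toCLR, hx, hm,
    fun c => long_unbdd hfR ClosedLongRay.exists_gt_seq b.toCLR _ hm c⟩

theorem IsParam.vert (H : A.IsParam h) {j : ClosedLongRay → LongLine} (hj : Continuous j)
    {x₀ : M} {t₁ : ClosedLongRay} (hx : ∀ t, t₁ ≤ t → (h (j t)).1 = x₀)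
    (hm : StrictMonoOn (fun t => (h (j t)).2) (Ici t₁))
    (hu : ∀ c, ∃ t, t₁ ≤ t ∧ c < (h (j t)).2) (s : LongRay) (hs : (h (j t₁)).2 < s) :
    A.Vert x₀ s := by
  have hg : Continuous (fun t => (h (j t)).2) := continuous_snd.comp (H.cont.comp hj)
  obtain ⟨t₂, ht₂, hst₂⟩ := hu s
  obtain ⟨t, ht, hts⟩ := intermediate_value_Icc ht₂ hg.continuousOn ⟨hs.le, hst₂.le⟩
  simp only at hts
  have ht1 : t₁ < t := by
    rcases ht.1.lt_or_eq with k | k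
    · exact k
    · rw [← k] at hts
      exact absurd hts hs.ne
  have hp : h (j t) = (x₀, s) := Prod.ext (hx t ht.1) hts
  intro i hi
  have e := hj.continuousAt.eventually (H.plq i (j t) (by rw [hp]; exact hi))
  obtain ⟨l, r, hlr, hsub⟩ := (mem_nhds_iff_exists_Ioo_subset' ⟨t₁, ht1⟩ (exists_gt t)).1
    (inter_mem e (Ioi_mem_nhds ht1))
  obtain ⟨l', hl1, hl2⟩ := exists_between hlr.1
  obtain ⟨r', hr1, hr2⟩ := exists_between hlr.2
  have ml : l' ∈ Ioo l r := ⟨hl1, hl2.trans hlr.2⟩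
  have hl : t₁ ≤ l' := (hsub ml).2.le
  have k1 := hm hl ht.1 hl2
  have k2 := hm ht.1 (ht.1.trans hr1.le) hr1
  simp only [hts] at k1 k2
  filter_upwards [Ioo_mem_nhds k1 k2] with s' hs'
  obtain ⟨t', ht', hts'⟩ := intermediate_value_Icc (hl2.trans hr1).le hg.continuousOn
    ⟨hs'.1.le, hs'.2.le⟩
  simp only at hts'
  have hin := hsub (Icc_subset_Ioo hl1 hr2 ht')
  have hp' : h (j t') = (x₀, s') := Prod.ext (hx t' (hl.trans ht'.1)) hts'
  have := hin.1.2
  rw [hp', hp] at this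
  exact this

theorem IsParam.end_sign (H : A.IsParam h) {β : LongRay} {o : M × LongRay → A.I → Prop}
    (hv : ∀ x s, β < s → A.Vert x s)
    (ho : ∀ p, A.IsOr β o p) {j : ClosedLongRay → LongLine} (hj : Continuous j)
    {t₁ : ClosedLongRay}
    (hm : StrictMonoOn (fun t => (h (j t)).2) (Ici t₁))
    (hu : ∀ c, ∃ t, t₁ ≤ t ∧ c < (h (j t)).2) :
    ∃ t, (StrictMono j → A.Pos h o (j t)) ∧ (StrictAnti j → ¬ A.Pos h o (j t)) := by
  obtain ⟨t, ht, hβ⟩ := hu β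
  obtain ⟨i, hi⟩ := A.covers (h (j t))
  refine ⟨t, ?_⟩
  rw [H.pos_iff ho hi, (ho (h (j t))).2.2 hβ i hi]
  have n1 := not_hinc_hdec (A := A) (h := h) (i := i) (t := j t)
  have n2 := A.not_inc_dec (W := (Prod.snd : M × LongRay → LongRay)) hi
  have d1 := A.vert_dir hv hi hβ
  have d2 := H.hdir i (j t) hi
  have main : ∀ N ∈ 𝓝 (h (j t)), ∀ N' ∈ 𝓝 (j t), ∃ t', t < t' ∧
      (h (j t)).2 < (h (j t')).2 ∧ h (j t') ∈ N ∧ h (j t') ∈ A.U i ∧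
      A.pr i (h (j t')) = A.pr i (h (j t)) ∧ j t' ∈ N' := by
    intro N hN N' hN'
    obtain ⟨t', h1, h2⟩ := exists_gt_of_ev
      (hj.continuousAt.eventually_mem (inter_mem (H.pair hi hN) hN'))
    exact ⟨t', h1, hm ht (ht.trans h1.le) h1, h2.1.1, h2.1.2.1, h2.1.2.2, h2.2⟩
  have b1 : StrictMono j → A.HInc h i (j t) → A.Dec i (h (j t)) Prod.snd → False := by
    rintro hjm ⟨N', hN', k'⟩ ⟨N, hN, k⟩
    obtain ⟨t', c1, c2, c3, c4, c5, c6⟩ := main N hN N' hN'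
    exact lt_asymm c2 (k _ (mem_of_mem_nhds hN) _ c3 hi c4 c5.symm
      (k' _ (mem_of_mem_nhds hN') _ c6 (hjm c1)))
  have b2 : StrictMono j → A.HDec h i (j t) → A.Inc i (h (j t)) Prod.snd → False := by
    rintro hjm ⟨N', hN', k'⟩ ⟨N, hN, k⟩
    obtain ⟨t', c1, c2, c3, c4, c5, c6⟩ := main N hN N' hN'
    exact lt_asymm c2 (k _ c3 _ (mem_of_mem_nhds hN) c4 hi c5
      (k' _ (mem_of_mem_nhds hN') _ c6 (hjm c1)))
  have b3 : StrictAnti j → A.HInc h i (j t) → A.Inc i (h (j t)) Prod.snd → False := by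
    rintro hjm ⟨N', hN', k'⟩ ⟨N, hN, k⟩
    obtain ⟨t', c1, c2, c3, c4, c5, c6⟩ := main N hN N' hN'
    exact lt_asymm c2 (k _ c3 _ (mem_of_mem_nhds hN) c4 hi c5
      (k' _ c6 _ (mem_of_mem_nhds hN') (hjm c1)))
  have b4 : StrictAnti j → A.HDec h i (j t) → A.Dec i (h (j t)) Prod.snd → False := by
    rintro hjm ⟨N', hN', k'⟩ ⟨N, hN, k⟩
    obtain ⟨t', c1, c2, c3, c4, c5, c6⟩ := main N hN N' hN'
    exact lt_asymm c2 (k _ (mem_of_mem_nhds hN) _ c3 hi c4 c5.symm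
      (k' _ c6 _ (mem_of_mem_nhds hN') (hjm c1)))
  constructor
  · intro hjm
    have b1 := b1 hjm
    have b2 := b2 hjm
    clear b3 b4 main
    tauto
  · intro hjm
    have b3 := b3 hjm
    have b4 := b4 hjm
    clear b1 b2 main
    tauto

theorem IsParam.contra [ConnectedSpace M] [TopologicalSpace.SeparableSpace M]
    (H : A.IsParam h) (hsq : Squat M)
    (hfc : ∀ x : M, (𝓝 x).IsCountablyGenerated)
    (hfR : ∀ s : LongRay, (𝓝 s).IsCountablyGenerated) : False := by
  obtain ⟨x₀, t₁, hx, hm, hu⟩ := H.ends hsq hfR LongLine.continuous_pos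
    LongLine.pos_strictMono.injective
  obtain ⟨x₀', t₁', hx', hm', hu'⟩ := H.ends hsq hfR LongLine.continuous_negHalf
    LongLine.negHalf_strictAnti.injective
  obtain ⟨β, hv⟩ := A.vert_all LongRay.exists_gt_seq hfc x₀ _ (H.vert LongLine.continuous_pos hx hm hu)
  obtain ⟨o, ho⟩ := A.exists_orientation hv
  obtain ⟨t, ht, _⟩ := H.end_sign hv ho LongLine.continuous_pos hm hu
  obtain ⟨t', _, ht'⟩ := H.end_sign hv ho LongLine.continuous_negHalf hm' hu'
  have h0 : LongLine.negHalf ClosedLongRay.zero = LongLine.pos ClosedLongRay.zero :=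
    LongLine.negHalf_zero _ (fun ⟨y, hy⟩ => not_lt.2 (ClosedLongRay.zero_le y) hy)
  have e1 := H.pos_const ho LongLine.continuous_pos t ClosedLongRay.zero
  have e2 := H.pos_const ho LongLine.continuous_negHalf t' ClosedLongRay.zero
  rw [h0] at e2
  exact ht' LongLine.negHalf_strictAnti (e2.2 (e1.1 (ht LongLine.pos_strictMono)))

end FB
end

noncomputable section
set_option linter.unusedSectionVars false
set_option linter.unusedVariables false
open Set Topology Filter

namespace Foliation
variable {X : Type*} [TopologicalSpace X] {m : ℕ}

open Classical in
/-- The unbundled atlas of a one-dimensional foliation. -/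
def toFB (F : Foliation X 1 m) : FB X (Fin m → ℝ) where
  I := F.ι
  U := F.U
  u i x := if hx : x ∈ F.U i then (F.chart i ⟨x, hx⟩).1 0 else 0
  pr i x := if hx : x ∈ F.U i then (F.chart i ⟨x, hx⟩).2 else 0
  c i a y := ((F.chart i).symm (fun _ => a, y)).1
  isOpen := F.isOpen
  covers := F.covers
  cont_c i := by
    refine continuous_subtype_val.comp ((F.chart i).symm.continuous.comp ?_)
    fun_prop
  c_mem i a y := Subtype.property _
  u_c i a y := by
    rw [dif_pos (Subtype.property _)]
    simp
  pr_c i a y := by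
    rw [dif_pos (Subtype.property _)]
    simp
  c_eq i p hp := by
    rw [dif_pos hp, dif_pos hp]
    have : ((fun _ => (F.chart i ⟨p, hp⟩).1 0, (F.chart i ⟨p, hp⟩).2) :
        (Fin 1 → ℝ) × (Fin m → ℝ)) = F.chart i ⟨p, hp⟩ := by
      refine Prod.ext ?_ rfl
      funext k
      rw [Subsingleton.elim k 0]
    rw [this, Homeomorph.symm_apply_apply]
  cont_u i := by
    rw [continuousOn_iff_continuous_domRestrict]
    have : Continuous (fun x : F.U i => (F.chart i x).1 0) := by
      have := (F.chart i).continuous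
      fun_prop
    convert this using 2 with x
    simp
  cont_pr i := by
    rw [continuousOn_iff_continuous_domRestrict]
    have : Continuous (fun x : F.U i => (F.chart i x).2) := by
      have := (F.chart i).continuous
      fun_prop
    convert this using 2 with x
    simp
  compat i j x y hxi hxj hyi hyj h := by
    rw [dif_pos hxi, dif_pos hyi] at h
    rw [dif_pos hxj, dif_pos hyj]
    exact F.compat i j x y hxi hxj hyi hyj h

theorem mem_fibre (F : Foliation X 1 m) (i : F.ι) (y : Fin m → ℝ) (w : X) :
    w ∈ F.plaqueFibre i y ↔ w ∈ F.toFB.U i ∧ F.toFB.pr i w = y := by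
  constructor
  · rintro ⟨hw, h⟩
    refine ⟨hw, ?_⟩
    simp only [toFB]
    rw [dif_pos hw, h]
  · rintro ⟨hw, h⟩
    simp only [toFB] at h hw
    rw [dif_pos hw] at h
    exact ⟨hw, h⟩

theorem fibre_eq_range (F : Foliation X 1 m) (i : F.ι) (y : Fin m → ℝ) :
    F.plaqueFibre i y = range (fun a => F.toFB.c i a y) := by
  ext w
  rw [mem_fibre]
  constructor
  · rintro ⟨h1, h2⟩
    exact ⟨F.toFB.u i w, by rw [← h2]; exact F.toFB.c_eq i w h1⟩
  · rintro ⟨a, rfl⟩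
    exact ⟨F.toFB.c_mem _ _ _, F.toFB.pr_c _ _ _⟩

theorem isPlaque_iff (F : Foliation X 1 m) (P : Set X) :
    F.IsPlaque P ↔ ∃ i y, P = F.plaqueFibre i y := by
  have hpc : ∀ i y, IsPreconnected (F.plaqueFibre i y) := by
    intro i y
    rw [fibre_eq_range]
    exact isPreconnected_range (F.toFB.cont_line i y)
  constructor
  · rintro ⟨i, y, z, hz, rfl⟩
    exact ⟨i, y, (hpc i y).connectedComponentIn hz⟩
  · rintro ⟨i, y, rfl⟩
    have hz : F.toFB.c i 0 y ∈ F.plaqueFibre i y := by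
      rw [fibre_eq_range]
      exact ⟨0, rfl⟩
    exact ⟨i, y, _, hz, ((hpc i y).connectedComponentIn hz).symm⟩

/-- the leaf with its leaf topology -/
def LeafSp (F : Foliation X 1 m) (L : Set X) : Type _ := L

/-- point of a leaf -/
def LeafSp.mk (F : Foliation X 1 m) {L : Set X} (x : X) (hx : x ∈ L) : F.LeafSp L := ⟨x, hx⟩

instance (F : Foliation X 1 m) (L : Set X) : TopologicalSpace (F.LeafSp L) := F.leafTopology L

variable (F : Foliation X 1 m) {L : Set X}

theorem fibre_sub (hL : F.IsLeaf L) {i : F.ι} {x : X} (hx : x ∈ L) (hi : x ∈ F.toFB.U i) :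
    F.plaqueFibre i (F.toFB.pr i x) ⊆ L := by
  obtain ⟨x₀, rfl⟩ := hL
  intro w hw
  exact Relation.EqvGen.trans _ _ _ hx (Relation.EqvGen.rel _ _
    ⟨_, (F.isPlaque_iff _).2 ⟨i, _, rfl⟩, (F.mem_fibre _ _ _).2 ⟨hi, rfl⟩, hw⟩)

theorem fibre_open {i : F.ι} {y : Fin m → ℝ} (h : F.plaqueFibre i y ⊆ L) :
    IsOpen {w : F.LeafSp L | w.1 ∈ F.plaqueFibre i y} :=
  TopologicalSpace.isOpen_generateFrom_of_mem ⟨_, (F.isPlaque_iff _).2 ⟨i, y, rfl⟩, h, rfl⟩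

theorem cont_k {i : F.ι} {y : Fin m → ℝ} (h : ∀ a, F.toFB.c i a y ∈ L) :
    Continuous (fun a => LeafSp.mk F (F.toFB.c i a y) (h a)) := by
  refine continuous_generateFrom_iff.2 ?_
  rintro s ⟨P, hP, hPL, rfl⟩
  obtain ⟨j, z, rfl⟩ := (F.isPlaque_iff _).1 hP
  rw [isOpen_iff_mem_nhds]
  intro a ha
  have ha' := (F.mem_fibre _ _ _).1 ha
  have e := (F.toFB.cont_line i y).continuousAt.eventually_mem
    ((F.toFB.isOpen j).mem_nhds ha'.1)
  filter_upwards [e] with b hb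
  refine (F.mem_fibre _ _ _).2 ⟨hb, ?_⟩
  refine Eq.trans ?_ ha'.2
  exact F.toFB.compat i j _ _ (F.toFB.c_mem _ _ _) hb (F.toFB.c_mem _ _ _) ha'.1
    ((F.toFB.pr_c i b y).trans (F.toFB.pr_c i a y).symm)

end Foliation

/-- properties of an open strictly monotone line -/
theorem FB.param_of {M : Type} [TopologicalSpace M] {m : ℕ} (F : Foliation (M × LongRay) 1 m)
    {L : Set (M × LongRay)} (hL : F.IsLeaf L) (e : F.LeafSp L ≃ₜ LongLine) :
    F.toFB.IsParam (fun t => (e.symm t).1) := by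
  set h : LongLine → M × LongRay := fun t => (e.symm t).1 with hh
  have hin : Function.Injective h := Subtype.val_injective.comp e.symm.injective
  have plq : ∀ i t, h t ∈ F.toFB.U i →
      ∀ᶠ t' in 𝓝 t, h t' ∈ F.toFB.U i ∧ F.toFB.pr i (h t') = F.toFB.pr i (h t) := by
    intro i t hi
    have ho := F.fibre_open (F.fibre_sub hL (e.symm t).2 hi)
    have := e.symm.continuous.continuousAt.eventually_mem
      (ho.mem_nhds ((F.mem_fibre _ _ _).2 ⟨hi, rfl⟩ : e.symm t ∈ _))
    filter_upwards [this] with t' ht'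
    exact (F.mem_fibre _ _ _).1 ht'
  have hk : ∀ i t, h t ∈ F.toFB.U i → ∃ κ : ℝ → LongLine, (StrictMono κ ∨ StrictAnti κ) ∧
      range κ ∈ 𝓝 t ∧ κ (F.toFB.u i (h t)) = t ∧
      ∀ a, h (κ a) = F.toFB.c i a (F.toFB.pr i (h t)) := by
    intro i t hi
    have hsub := F.fibre_sub hL (e.symm t).2 hi
    have hc : ∀ a, F.toFB.c i a (F.toFB.pr i (h t)) ∈ L := by
      intro a
      exact hsub ((F.mem_fibre _ _ _).2 ⟨F.toFB.c_mem _ _ _, F.toFB.pr_c _ _ _⟩)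
    have hkap : ∀ a, h (e (Foliation.LeafSp.mk F (F.toFB.c i a (F.toFB.pr i (h t))) (hc a))) =
        F.toFB.c i a (F.toFB.pr i (h t)) := by
      intro a
      exact congrArg Subtype.val (e.symm_apply_apply _)
    refine ⟨fun a => e (Foliation.LeafSp.mk F (F.toFB.c i a (F.toFB.pr i (h t))) (hc a)), ?_, ?_, ?_, hkap⟩
    · refine Continuous.strictMono_of_inj (e.continuous.comp (F.cont_k hc)) ?_
      intro a b hab
      have h1 := congrArg h hab
      simp only [hkap] at h1
      have h2 := congrArg (F.toFB.u i) h1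
      rwa [F.toFB.u_c, F.toFB.u_c] at h2
    · filter_upwards [plq i t hi] with t' ht'
      refine ⟨F.toFB.u i (h t'), hin ?_⟩
      rw [hkap, ← ht'.2, F.toFB.c_eq _ _ ht'.1]
    · apply hin
      rw [hkap, F.toFB.c_eq _ _ hi]
  refine ⟨plq, ?_, hin, ?_⟩
  · rw [continuous_iff_continuousAt]
    intro t
    obtain ⟨i, hi⟩ := F.toFB.covers (h t)
    obtain ⟨κ, hmon, hr, h0, hκ⟩ := hk i t hi
    refine tendsto_def.2 fun N hN => ?_
    obtain ⟨δ, hδ, hbox⟩ := F.toFB.box hi hN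
    have hb := Metric.mem_ball_self (x := F.toFB.pr i (h t)) hδ
    rcases hmon with hm | hm
    · have l1 := hm (show F.toFB.u i (h t) - δ < F.toFB.u i (h t) by linarith)
      have l2 := hm (show F.toFB.u i (h t) < F.toFB.u i (h t) + δ by linarith)
      rw [h0] at l1 l2
      filter_upwards [hr, Ioo_mem_nhds l1 l2]
      rintro _ ⟨a, rfl⟩ ⟨h1, h2⟩
      rw [mem_preimage, hκ]
      exact hbox _ _ ⟨hm.lt_iff_lt.1 h1, hm.lt_iff_lt.1 h2⟩ hb
    · have l1 := hm (show F.toFB.u i (h t) - δ < F.toFB.u i (h t) by linarith)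
      have l2 := hm (show F.toFB.u i (h t) < F.toFB.u i (h t) + δ by linarith)
      rw [h0] at l1 l2
      filter_upwards [hr, Ioo_mem_nhds l2 l1]
      rintro _ ⟨a, rfl⟩ ⟨h1, h2⟩
      rw [mem_preimage, hκ]
      exact hbox _ _ ⟨hm.lt_iff_gt.1 h2, hm.lt_iff_gt.1 h1⟩ hb
  · intro i t hi
    obtain ⟨κ, hmon, hr, h0, hκ⟩ := hk i t hi
    rcases hmon with hm | hm
    · left
      refine ⟨_, hr, ?_⟩
      rintro _ ⟨a, rfl⟩ _ ⟨b, rfl⟩ hab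
      rw [hκ, hκ, F.toFB.u_c, F.toFB.u_c]
      exact hm.lt_iff_lt.1 hab
    · right
      refine ⟨_, hr, ?_⟩
      rintro _ ⟨a, rfl⟩ _ ⟨b, rfl⟩ hab
      rw [hκ, hκ, F.toFB.u_c, F.toFB.u_c]
      exact hm.lt_iff_gt.1 hab

theorem Foliation.firstCountable {X : Type*} [TopologicalSpace X] {m : ℕ} (F : Foliation X 1 m) :
    FirstCountableTopology X := by
  refine ⟨fun x => ?_⟩
  obtain ⟨i, hi⟩ := F.covers x
  have : FirstCountableTopology (F.U i) := (F.chart i).isInducing.firstCountableTopology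
  rw [← (F.isOpen i).isOpenEmbedding_subtypeVal.map_nhds_eq ⟨x, hi⟩]
  infer_instance

end

/-- If `M` is a squat, separable, connected `m`-manifold and `ℱ` is a
dimension-one foliation on `M × 𝕃₊` with at least one long leaf, then no leaf of `ℱ` is
homeomorphic, in its leaf topology, to the long line `𝕃`. -/
theorem statement14 (m : ℕ) (hm : 1 ≤ m) (M : Type) [TopologicalSpace M]
    (hM : IsTopManifold M m) (hconn : ConnectedSpace M) (hsq : Squat M)
    [TopologicalSpace.SeparableSpace M]
    (F : Foliation (M × LongRay) 1 m)
    (hlong : ∃ L, F.IsLongLeaf L) :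
    ∀ L, F.IsLeaf L →
      ¬ Nonempty (@Homeomorph L LongLine (F.leafTopology L) inferInstance) := by
  rintro L hL ⟨e⟩
  have hX := F.firstCountable
  obtain ⟨x₀⟩ := hM.1
  obtain ⟨s₀⟩ := (inferInstance : Nonempty LongRay)
  have i1 : IsInducing (fun x : M => (x, s₀)) :=
    IsInducing.of_comp (g := Prod.fst) (by fun_prop) continuous_fst IsInducing.id
  have i2 : IsInducing (fun s : LongRay => (x₀, s)) :=
    IsInducing.of_comp (g := Prod.snd) (by fun_prop) continuous_snd IsInducing.id
  have f1 := i1.firstCountableTopology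
  have f2 := i2.firstCountableTopology
  exact (FB.param_of F hL e).contra hsq f1.nhds_generated_countable f2.nhds_generated_countable
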